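/- Let U be a bounded connected open set in ℂ^m. Then there exist a sequence of injective holomorphic maps F_j : B^m(0,1) → U and numbers 0 < s_j < 1, j = 1,2,…, such that: (i) F_{j+1}(B^m(0,s_{j+1})) ⊇ F_j(B^m(0,s_j)) for all j ≥ 1, and (ii) vol(F_{j+1}(B^m(0,s_{j+1}))) ≥ vol(F_j(B^m(0,s_j))) + (ρ_m/(3·32^{2m}))·(vol(U) − vol(F_j(B^m(0,s_j)))) for all j ≥ 1. -/

import Mathlib

open Metric MeasureTheory

noncomputable instance {m : ℕ} : MeasurableSpace (EuclideanSpace ℂ (Fin m)) := borel _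
instance {m : ℕ} : BorelSpace (EuclideanSpace ℂ (Fin m)) := ⟨rfl⟩
noncomputable instance {m : ℕ} : InnerProductSpace ℝ (EuclideanSpace ℂ (Fin m)) :=
  InnerProductSpace.rclikeToReal ℂ _

/-- Lebesgue measure on `ℂ^m ≅ ℝ^{2m}`. -/
noncomputable instance {m : ℕ} : MeasureSpace (EuclideanSpace ℂ (Fin m)) :=
  measureSpaceOfInnerProductSpace

/-- `ρ_m`: the ratio of the volume of a maximal ball inscribed in a cube of `ℝ^{2m}` to the
volume of the cube, i.e. the volume of a ball of radius `1/2` in `ℂ^m ≅ ℝ^{2m}` (the unit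
cube having volume `1`). -/
noncomputable def rhoConst (m : ℕ) : ℝ :=
  (volume (ball (0 : EuclideanSpace ℂ (Fin m)) (1 / 2))).toReal

/-!
The image of a ball under a holomorphic embedding `F` can be enlarged by *blowing a bubble*.
Suppose a closed ball `closedBall q r ⊆ U` meets `F (closedBall 0 1)` only at a boundary point
`F e`. Near `e`, add to `F` a multiple of `s / √u • n + s / u • W (z⊥)`, where `n` is the unit
vector from `F e` towards `q`, `u = 1 + (3 s / 4)² - ⟪e, z⟫`, `z⊥` is the part of `z` orthogonal
to `e`, and `W` is an isometry taking `e` to `n`. As `s → 0` this term tends to `0` away from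
`e`, while near `e` it takes its values in a ball about a multiple of `n`, hits the centre and
keeps the unit sphere away from it. Hence the new image stays in `U`, almost contains the old
one, and contains a ball about `q` of radius comparable to `r`. Injectivity survives because the
bubble expands in directions compatible with the derivative `M` of `F` at `e`: as `F e` is the
point nearest to `q`, `M` takes normal components to normal components, and the polar decomposition
provides a `W` relative to which `M` has positive real part on `e^⊥`.

Given finitely many disjoint closed balls in `U` outside of the image, delete their concentric
halves from `U`. The points which can be swallowed inside what is left form a relatively clopen
set, so by connectedness of `U` the image can be led into one of the balls; one more bubble then
swallows the concentric ball of `1/32` of the radius, and one inducts on the number of balls. By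
Besicovitch's theorem the balls can be chosen to fill any proportion `θ < 1` of the missing
volume, so each step can gain any proportion `κ < 32 ^ (-2 m)` of it. As `ρ_m ≤ 1`, this covers
`ρ_m / (3 · 32 ^ (2 m))`.
-/

namespace BallExhaustion

open Filter Topology

section Planar

/-- The closed sector `|arg x| ≤ π/4`, in which the principal square roots of the points of the
right half-plane lie. -/
def sector : Set ℂ := {x | |x.im| ≤ x.re}

variable {x y : ℂ}

lemma re_nonneg_of_mem_sector (hx : x ∈ sector) : 0 ≤ x.re :=
  (abs_nonneg _).trans hx

lemma add_mem_sector (hx : x ∈ sector) (hy : y ∈ sector) : x + y ∈ sector := by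
  change |x.im + y.im| ≤ x.re + y.re
  exact (abs_add_le _ _).trans (add_le_add hx hy)

lemma ofReal_mul_mem_sector {b : ℝ} (hb : 0 ≤ b) (hx : x ∈ sector) : (b : ℂ) * x ∈ sector := by
  change |((b : ℂ) * x).im| ≤ ((b : ℂ) * x).re
  rw [Complex.im_ofReal_mul, Complex.re_ofReal_mul, abs_mul, abs_of_nonneg hb]
  exact mul_le_mul_of_nonneg_left hx hb

lemma abs_im_mul_im_le_of_mem_sector (hx : x ∈ sector) (hy : y ∈ sector) :
    |x.im * y.im| ≤ x.re * y.re := by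
  rw [abs_mul]
  exact mul_le_mul hx hy (abs_nonneg _) (re_nonneg_of_mem_sector hx)

lemma re_mul_nonneg_of_mem_sector (hx : x ∈ sector) (hy : y ∈ sector) : 0 ≤ (x * y).re := by
  rw [Complex.mul_re, sub_nonneg]
  exact (le_abs_self _).trans (abs_im_mul_im_le_of_mem_sector hx hy)

lemma norm_sq_eq_re_sq_add_im_sq (x : ℂ) : ‖x‖ ^ 2 = x.re ^ 2 + x.im ^ 2 := by
  rw [Complex.sq_norm, Complex.normSq_apply]; ring

lemma norm_add_sq_complex (x y : ℂ) :
    ‖x + y‖ ^ 2 = ‖x‖ ^ 2 + ‖y‖ ^ 2 + 2 * (x.re * y.re + x.im * y.im) := by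
  simp only [norm_sq_eq_re_sq_add_im_sq, Complex.add_re, Complex.add_im]; ring

lemma norm_le_norm_add_of_mem_sector (hx : x ∈ sector) (hy : y ∈ sector) : ‖x‖ ≤ ‖x + y‖ := by
  refine le_of_sq_le_sq ?_ (norm_nonneg _)
  have := (abs_le.mp (abs_im_mul_im_le_of_mem_sector hx hy)).1
  rw [norm_add_sq_complex]
  nlinarith [sq_nonneg ‖y‖]

-- The two numbers make an angle of at most `3π/4`.
lemma norm_add_norm_le_of_mem_sector (hx : x ∈ sector) (hy : 0 ≤ y.re) :
    ‖x‖ + ‖y‖ ≤ 3 * ‖x + y‖ := by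
  have im_le : |x.im| ≤ 3 / 4 * ‖x‖ := by
    refine abs_le_of_sq_le_sq ?_ (by positivity)
    have : x.im ^ 2 ≤ x.re ^ 2 := sq_le_sq.mpr (le_trans hx (le_abs_self _))
    rw [mul_pow, norm_sq_eq_re_sq_add_im_sq]
    linarith [sq_nonneg x.im]
  have im_mul_im : -(3 / 4 * ‖x‖ * ‖y‖) ≤ x.im * y.im := by
    refine (abs_le.mp ?_).1
    rw [abs_mul]
    gcongr
    exact Complex.abs_im_le_norm y
  have re_mul_re : 0 ≤ x.re * y.re := mul_nonneg (re_nonneg_of_mem_sector hx) hy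
  refine le_of_sq_le_sq ?_ (by positivity)
  rw [mul_pow, norm_add_sq_complex]
  nlinarith [sq_nonneg (‖x‖ - ‖y‖)]

lemma sqrt_sq (u : ℂ) : u.sqrt ^ 2 = u :=
  Complex.cpow_ofNat_inv_pow u 2

lemma sqrt_re_pos {u : ℂ} (hu : 0 < u.re) : 0 < u.sqrt.re := by
  rw [Complex.sqrt, Complex.cpow_inv_two_re]
  exact Real.sqrt_pos.mpr (by linarith [norm_nonneg u])

lemma sqrt_ne_zero {u : ℂ} (hu : 0 < u.re) : u.sqrt ≠ 0 := fun h => by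
  simpa [h] using sqrt_re_pos hu

lemma sqrt_mem_sector {u : ℂ} (hu : 0 < u.re) : u.sqrt ∈ sector := by
  refine abs_le_of_sq_le_sq ?_ (sqrt_re_pos hu).le
  have : u.re = u.sqrt.re ^ 2 - u.sqrt.im ^ 2 := by
    conv_lhs => rw [← sqrt_sq u, pow_two, Complex.mul_re]
    ring
  linarith

-- Both terms factor through `x - y`, and the cofactors `x + y`, `(x y)⁻¹` cannot cancel.
lemma add_norm_le_norm_sq_sub_sub_inv (hx : x ∈ sector) (hy : y ∈ sector) (hx0 : x ≠ 0)
    (hy0 : y ≠ 0) {b k : ℝ} (hb : 0 ≤ b) (hk : 0 ≤ k) :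
    b * ‖x ^ 2 - y ^ 2‖ + k * ‖x⁻¹ - y⁻¹‖ ≤
      3 * ‖(b : ℂ) * (x ^ 2 - y ^ 2) - k * (x⁻¹ - y⁻¹)‖ := by
  have sq_sub : x ^ 2 - y ^ 2 = (x - y) * (x + y) := by ring
  have inv_sub : x⁻¹ - y⁻¹ = -((x - y) * (x * y)⁻¹) := by field_simp; ring
  have inv_re : 0 ≤ ((k : ℂ) * (x * y)⁻¹).re := by
    rw [Complex.re_ofReal_mul, Complex.inv_re]
    exact mul_nonneg hk (div_nonneg (re_mul_nonneg_of_mem_sector hx hy) (Complex.normSq_nonneg _))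
  calc b * ‖x ^ 2 - y ^ 2‖ + k * ‖x⁻¹ - y⁻¹‖
      = ‖x - y‖ * (‖(b : ℂ) * (x + y)‖ + ‖(k : ℂ) * (x * y)⁻¹‖) := by
        rw [sq_sub, inv_sub, norm_neg]
        simp only [norm_mul, Complex.norm_of_nonneg hb, Complex.norm_of_nonneg hk]
        ring
    _ ≤ ‖x - y‖ * (3 * ‖(b : ℂ) * (x + y) + k * (x * y)⁻¹‖) := by
        gcongr
        exact norm_add_norm_le_of_mem_sector
          (ofReal_mul_mem_sector hb (add_mem_sector hx hy)) inv_re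
    _ = 3 * ‖(b : ℂ) * (x ^ 2 - y ^ 2) - k * (x⁻¹ - y⁻¹)‖ := by
        rw [mul_left_comm, ← norm_mul, sq_sub, inv_sub]
        congr 2; ring

lemma norm_inv_sub_inv_le {τ : ℝ} (hτ : 0 < τ) (hx : τ ≤ ‖x‖) (hy : τ ≤ ‖y‖) :
    ‖x⁻¹ - y⁻¹‖ ≤ ‖x - y‖ / τ ^ 2 := by
  have hx0 : x ≠ 0 := norm_pos_iff.mp (hτ.trans_le hx)
  have hy0 : y ≠ 0 := norm_pos_iff.mp (hτ.trans_le hy)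
  rw [inv_sub_inv hx0 hy0, norm_div, norm_sub_rev, norm_mul, pow_two]
  gcongr

lemma norm_inv_sub_inv_le_of_mem_sector {τ : ℝ} (hτ : 0 < τ) (hx : x ∈ sector) (hy : y ∈ sector)
    (hτx : τ ≤ ‖x‖) (hτy : τ ≤ ‖y‖) : ‖x⁻¹ - y⁻¹‖ ≤ ‖x ^ 2 - y ^ 2‖ / τ ^ 3 := by
  have norm_sub_le : ‖x - y‖ * τ ≤ ‖x ^ 2 - y ^ 2‖ := by
    rw [show x ^ 2 - y ^ 2 = (x - y) * (x + y) by ring, norm_mul]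
    gcongr
    exact hτx.trans (norm_le_norm_add_of_mem_sector hx hy)
  refine (norm_inv_sub_inv_le hτ hτx hτy).trans ?_
  rw [div_le_div_iff₀ (by positivity) (by positivity), pow_succ, ← mul_assoc, mul_right_comm]
  gcongr

lemma norm_inv_sq_sub_inv_sq_le (hx0 : x ≠ 0) (hxy : ‖x‖ ≤ ‖y‖) :
    ‖x‖ * ‖(x ^ 2)⁻¹ - (y ^ 2)⁻¹‖ ≤ 2 * ‖x⁻¹ - y⁻¹‖ := by
  have : 0 < ‖x‖ := norm_pos_iff.mpr hx0
  have add_le : ‖x‖ * ‖x⁻¹ + y⁻¹‖ ≤ 2 := by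
    calc ‖x‖ * ‖x⁻¹ + y⁻¹‖ ≤ ‖x‖ * (‖x‖⁻¹ + ‖y‖⁻¹) := by
          gcongr; simpa only [norm_inv] using norm_add_le x⁻¹ y⁻¹
      _ ≤ ‖x‖ * (‖x‖⁻¹ + ‖x‖⁻¹) := by gcongr
      _ = 2 := by field_simp; norm_num
  rw [show (x ^ 2)⁻¹ - (y ^ 2)⁻¹ = (x⁻¹ + y⁻¹) * (x⁻¹ - y⁻¹) by ring, norm_mul, ← mul_assoc]
  gcongr

end Planar

section BubbleSize

variable {x : ℂ} {s t : ℝ}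

lemma sq_mul_div_sq_le (hx0 : x ≠ 0) (ht : t ≤ 2 * ((x ^ 2).re - (3 / 4 * s) ^ 2)) :
    ‖(s : ℂ) / x‖ ^ 2 + s ^ 2 * t / ‖x ^ 2‖ ^ 2 ≤
      3 * ((s : ℂ) / x).re ^ 2 - 9 / 8 * ((s : ℂ) / x).re ^ 4 := by
  have re_sq : (x ^ 2).re = x.re ^ 2 - x.im ^ 2 := by rw [pow_two, Complex.mul_re]; ring
  have re_div : ((s : ℂ) / x).re = s * x.re / (x.re ^ 2 + x.im ^ 2) := by
    rw [Complex.div_re, Complex.normSq_apply]; simp; ring_nf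
  have hN : 0 < x.re ^ 2 + x.im ^ 2 := by
    rw [← norm_sq_eq_re_sq_add_im_sq]; positivity
  rw [re_sq] at ht
  rw [re_div, norm_div, div_pow, norm_pow, norm_sq_eq_re_sq_add_im_sq x, Complex.norm_real,
    Real.norm_eq_abs, sq_abs]
  generalize x.re = a at *
  generalize x.im = b at *
  have transverse_le : s ^ 2 * t / (a ^ 2 + b ^ 2) ^ 2 ≤
      s ^ 2 * (2 * (a ^ 2 - b ^ 2 - (3 / 4 * s) ^ 2)) / (a ^ 2 + b ^ 2) ^ 2 := by gcongr
  refine (add_le_add_right transverse_le _).trans (sub_nonneg.mp ?_)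
  have : 3 * (s * a / (a ^ 2 + b ^ 2)) ^ 2 - 9 / 8 * (s * a / (a ^ 2 + b ^ 2)) ^ 4 -
      (s ^ 2 / (a ^ 2 + b ^ 2) +
        s ^ 2 * (2 * (a ^ 2 - b ^ 2 - (3 / 4 * s) ^ 2)) / (a ^ 2 + b ^ 2) ^ 2) =
      s ^ 2 * b ^ 2 * (8 * (a ^ 2 + b ^ 2) ^ 2 + 9 * s ^ 2 * (2 * a ^ 2 + b ^ 2)) /
        (8 * (a ^ 2 + b ^ 2) ^ 4) := by
    field_simp; ring
  rw [this]
  positivity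

lemma norm_div_sub_one_sq (s : ℝ) (x : ℂ) :
    ‖(s : ℂ) / x - 1‖ ^ 2 = ‖(s : ℂ) / x‖ ^ 2 - 2 * ((s : ℂ) / x).re + 1 := by
  simp only [norm_sq_eq_re_sq_add_im_sq, Complex.sub_re, Complex.sub_im, Complex.one_re,
    Complex.one_im]
  ring

lemma norm_div_sub_one_sq_add_le_one (hs : 0 ≤ s) (hx : x ∈ sector) (hx0 : x ≠ 0)
    (ht : t ≤ 2 * ((x ^ 2).re - (3 / 4 * s) ^ 2)) :
    ‖(s : ℂ) / x - 1‖ ^ 2 + s ^ 2 * t / ‖x ^ 2‖ ^ 2 ≤ 1 := by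
  have hX : 0 ≤ ((s : ℂ) / x).re := by
    rw [Complex.div_re, Complex.ofReal_re, Complex.ofReal_im, zero_mul, zero_div, add_zero]
    exact div_nonneg (mul_nonneg hs (re_nonneg_of_mem_sector hx)) (Complex.normSq_nonneg _)
  have size := sq_mul_div_sq_le hx0 ht
  rw [norm_div_sub_one_sq]
  generalize ((s : ℂ) / x).re = X at *
  have cubic : 3 * X - 9 / 8 * X ^ 3 ≤ 2 := by
    nlinarith [mul_nonneg hX (sq_nonneg (X - 1)), sq_nonneg (X - 1)]
  nlinarith [mul_le_mul_of_nonneg_left cubic hX]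

lemma le_sq_mul_div_sq (hx0 : x ≠ 0) (hs : (3 / 4 * s) ^ 2 ≤ 1 / 10)
    (hre : (3 / 4 * s) ^ 2 ≤ (x ^ 2).re)
    (ht : 2 * ((x ^ 2).re - (3 / 4 * s) ^ 2) - ‖x ^ 2 - ((3 / 4 * s) ^ 2 : ℝ)‖ ^ 2 ≤ t) :
    2 * (((s : ℂ) / x) ^ 2).re - 9 / 8 * ‖(s : ℂ) / x‖ ^ 4 - 8 / 45 ≤ s ^ 2 * t / ‖x ^ 2‖ ^ 2 := by
  have hx2 : 0 < ‖x ^ 2‖ := norm_pos_iff.mpr (pow_ne_zero 2 hx0)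
  have norm_sub_le : ‖x ^ 2 - ((3 / 4 * s) ^ 2 : ℝ)‖ ^ 2 ≤ ‖x ^ 2‖ ^ 2 := by
    simp only [norm_sq_eq_re_sq_add_im_sq, Complex.sub_re, Complex.sub_im, Complex.ofReal_re,
      Complex.ofReal_im]
    nlinarith [sq_nonneg (3 / 4 * s)]
  have main : s ^ 2 * (2 * ((x ^ 2).re - (3 / 4 * s) ^ 2)) / ‖x ^ 2‖ ^ 2 =
      2 * (((s : ℂ) / x) ^ 2).re - 9 / 8 * ‖(s : ℂ) / x‖ ^ 4 := by
    have e1 : ((s : ℂ) / x) ^ 2 = (s ^ 2 : ℝ) / x ^ 2 := by push_cast; rw [div_pow]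
    have e2 : ‖(s : ℂ) / x‖ ^ 4 = s ^ 4 / ‖x ^ 2‖ ^ 2 := by
      rw [norm_div, Complex.norm_real, norm_pow, Real.norm_eq_abs, div_pow,
        (by decide : Even 4).pow_abs, ← pow_mul]
    rw [e2, e1, Complex.div_re, Complex.ofReal_re, Complex.ofReal_im, Complex.normSq_eq_norm_sq]
    field_simp
    ring
  calc 2 * (((s : ℂ) / x) ^ 2).re - 9 / 8 * ‖(s : ℂ) / x‖ ^ 4 - 8 / 45
      ≤ s ^ 2 * (2 * ((x ^ 2).re - (3 / 4 * s) ^ 2)) / ‖x ^ 2‖ ^ 2 - s ^ 2 := by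
        rw [main]; nlinarith
    _ = s ^ 2 * (2 * ((x ^ 2).re - (3 / 4 * s) ^ 2) - ‖x ^ 2‖ ^ 2) / ‖x ^ 2‖ ^ 2 := by
        field_simp
    _ ≤ s ^ 2 * t / ‖x ^ 2‖ ^ 2 := by gcongr; linarith

lemma one_div_le_norm_div_sub_one_sq_add (hx0 : x ≠ 0) (hs : (3 / 4 * s) ^ 2 ≤ 1 / 10)
    (hre : (3 / 4 * s) ^ 2 ≤ (x ^ 2).re)
    (ht : 2 * ((x ^ 2).re - (3 / 4 * s) ^ 2) - ‖x ^ 2 - ((3 / 4 * s) ^ 2 : ℝ)‖ ^ 2 ≤ t)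
    (ht0 : 0 ≤ t) :
    1 / 64 ≤ ‖(s : ℂ) / x - 1‖ ^ 2 + s ^ 2 * t / ‖x ^ 2‖ ^ 2 := by
  have size := le_sq_mul_div_sq hx0 hs hre ht
  have nonneg : 0 ≤ s ^ 2 * t / ‖x ^ 2‖ ^ 2 := by positivity
  generalize s ^ 2 * t / ‖x ^ 2‖ ^ 2 = T at *
  generalize (s : ℂ) / x = X at *
  by_contra! h
  rw [show ‖X‖ ^ 4 = (‖X‖ ^ 2) ^ 2 by ring, pow_two X, Complex.mul_re] at size
  simp only [norm_sq_eq_re_sq_add_im_sq, Complex.sub_re, Complex.sub_im, Complex.one_re,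
    Complex.one_im, sub_zero] at size h
  generalize X.re = a at *
  generalize X.im = b at *
  have ha : |a - 1| ≤ 1 / 8 := by
    refine abs_le_of_sq_le_sq ?_ (by norm_num)
    linarith [sq_nonneg b]
  obtain ⟨ha₁, ha₂⟩ := abs_le.mp ha
  have hb : b ^ 2 ≤ 1 / 64 := by nlinarith [sq_nonneg (a - 1)]
  have haa₁ : (7 / 8) ^ 2 ≤ a ^ 2 := by nlinarith
  have haa₂ : a ^ 2 ≤ (9 / 8) ^ 2 := by nlinarith
  have hbb := sq_nonneg b
  nlinarith [mul_nonneg (sub_nonneg.mpr haa₁) (sub_nonneg.mpr haa₂),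
    mul_nonneg hbb (sub_nonneg.mpr hb), mul_nonneg hbb (sub_nonneg.mpr haa₂)]

end BubbleSize

section ExpandsOn

variable {E F : Type*} [NormedAddCommGroup E] [NormedAddCommGroup F]

/-- `f` expands distances on `A` by at least the factor `c`; only `c > 0` is of interest. -/
def ExpandsOn (c : ℝ) (f : E → F) (A : Set E) : Prop :=
  ∀ x ∈ A, ∀ y ∈ A, c * ‖x - y‖ ≤ ‖f x - f y‖

variable {c : ℝ} {f g : E → F} {A B : Set E}

lemma ExpandsOn.mono (h : ExpandsOn c f A) (hBA : B ⊆ A) : ExpandsOn c f B :=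
  fun x hx y hy => h x (hBA hx) y (hBA hy)

lemma ExpandsOn.injOn (h : ExpandsOn c f A) (hc : 0 < c) : Set.InjOn f A := by
  intro x hx y hy hxy
  have := h x hx y hy
  rw [hxy, sub_self, norm_zero] at this
  exact sub_eq_zero.mp (norm_le_zero_iff.mp (nonpos_of_mul_nonpos_right this hc))

lemma ExpandsOn.of_le {d : ℝ} (h : ExpandsOn c f A) (hdc : d ≤ c) : ExpandsOn d f A :=
  fun x hx y hy => (mul_le_mul_of_nonneg_right hdc (norm_nonneg _)).trans (h x hx y hy)

lemma ExpandsOn.union (hA : ExpandsOn c f A) (hB : ExpandsOn c f B)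
    (hAB : ∀ x ∈ A \ B, ∀ y ∈ B \ A, c * ‖x - y‖ ≤ ‖f x - f y‖) : ExpandsOn c f (A ∪ B) := by
  have cross : ∀ x ∈ A, ∀ y ∈ B, c * ‖x - y‖ ≤ ‖f x - f y‖ := fun x hx y hy => by
    by_cases hxB : x ∈ B
    · exact hB x hxB y hy
    · by_cases hyA : y ∈ A
      · exact hA x hx y hyA
      · exact hAB x ⟨hx, hxB⟩ y ⟨hy, hyA⟩
  rintro x (hx | hx) y (hy | hy)
  · exact hA x hx y hy
  · exact cross x hx y hy
  · rw [norm_sub_rev, norm_sub_rev (f x)]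
    exact cross y hy x hx
  · exact hB x hx y hy

lemma ExpandsOn.comp {G : Type*} [NormedAddCommGroup G] {d : ℝ} {k : F → G} {C : Set F}
    (hk : ExpandsOn d k C) (h : ExpandsOn c f A) (hmaps : Set.MapsTo f A C) (hd : 0 ≤ d) :
    ExpandsOn (d * c) (k ∘ f) A := fun x hx y hy =>
  calc d * c * ‖x - y‖ = d * (c * ‖x - y‖) := mul_assoc ..
    _ ≤ d * ‖f x - f y‖ := by gcongr; exact h x hx y hy
    _ ≤ ‖k (f x) - k (f y)‖ := hk _ (hmaps hx) _ (hmaps hy)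

lemma ExpandsOn.add_lipschitzOnWith {K : NNReal} (hf : ExpandsOn c f A)
    (hg : LipschitzOnWith K g A) : ExpandsOn (c - K) (f + g) A := by
  intro x hx y hy
  have lipschitz : ‖g x - g y‖ ≤ K * ‖x - y‖ := by
    simpa only [dist_eq_norm] using hg.dist_le_mul x hx y hy
  have triangle : ‖f x - f y‖ ≤ ‖(f + g) x - (f + g) y‖ + ‖g x - g y‖ := by
    rw [show f x - f y = ((f + g) x - (f + g) y) - (g x - g y) by simp only [Pi.add_apply]; abel]
    exact norm_sub_le _ _
  linarith [hf x hx y hy]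

lemma injective_of_le_norm {c : ℝ} (hc : 0 < c) {M : E →+ F} (h : ∀ v, c * ‖v‖ ≤ ‖M v‖) :
    Function.Injective M :=
  (injective_iff_map_eq_zero M).mpr fun v hv => by
    have := h v
    rw [hv, norm_zero] at this
    exact norm_le_zero_iff.mp (nonpos_of_mul_nonpos_right this hc)

variable {𝕜 : Type*} [NontriviallyNormedField 𝕜] [NormedSpace 𝕜 E] [NormedSpace 𝕜 F]

lemma ExpandsOn.le_norm_fderiv (h : ExpandsOn c f A) {x : E} (hA : A ∈ 𝓝 x) {M : E →L[𝕜] F}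
    (hM : HasFDerivAt f M x) (v : E) : c * ‖v‖ ≤ ‖M v‖ := by
  have slope := (hM.hasLineDerivAt v).tendsto_slope_zero.norm
  have line : Tendsto (fun t : 𝕜 => x + t • v) (𝓝[≠] 0) (𝓝 x) := by
    have : Continuous fun t : 𝕜 => x + t • v := by fun_prop
    simpa using (this.tendsto 0).mono_left nhdsWithin_le_nhds
  refine ge_of_tendsto slope ?_
  filter_upwards [line.eventually hA, self_mem_nhdsWithin] with t ht ht0
  have ht0' : 0 < ‖t‖ := norm_pos_iff.mpr ht0
  have := h _ ht x (mem_of_mem_nhds hA)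
  rw [add_sub_cancel_left, norm_smul] at this
  rw [norm_smul, norm_inv, ← div_eq_inv_mul, le_div_iff₀ ht0']
  linarith

lemma ExpandsOn.isOpen_image [CompleteSpace 𝕜] [FiniteDimensional 𝕜 E] {f : E → E}
    (h : ExpandsOn c f A) (hc : 0 < c) (hA : IsOpen A)
    (hf : ∀ x ∈ A, ∃ M : E →L[𝕜] E, HasStrictFDerivAt f M x) : IsOpen (f '' A) := by
  have := FiniteDimensional.complete 𝕜 E
  rw [isOpen_iff_mem_nhds]
  rintro _ ⟨x, hx, rfl⟩
  have hAx := hA.mem_nhds hx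
  obtain ⟨M, hM⟩ := hf x hx
  have hinj : Function.Injective (M : E →ₗ[𝕜] E) :=
    injective_of_le_norm (M := (M : E →ₗ[𝕜] E).toAddMonoidHom) hc
      (h.le_norm_fderiv hAx hM.hasFDerivAt)
  rw [← hM.map_nhds_eq_of_surj
    (LinearMap.range_eq_top.mpr (LinearMap.injective_iff_surjective.mp hinj))]
  exact image_mem_map hAx

end ExpandsOn

lemma subset_image_ball_of_disjoint_sphere {X Y : Type*} [PseudoMetricSpace X] [ProperSpace X]
    [TopologicalSpace Y] [T2Space Y] {f : X → Y} {x : X} {r : ℝ}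
    (hf : ContinuousOn f (closedBall x r)) (hopen : IsOpen (f '' ball x r)) {S : Set Y}
    (hS : IsPreconnected S) (hne : (S ∩ f '' ball x r).Nonempty)
    (hsphere : ∀ z ∈ sphere x r, f z ∉ S) : S ⊆ f '' ball x r := by
  refine hS.subset_of_closure_inter_subset hopen hne ?_
  have hclosed := ((isCompact_closedBall x r).image_of_continuousOn hf).isClosed
  rintro y ⟨hy, hyS⟩
  obtain ⟨z, hz, rfl⟩ := closure_minimal (Set.image_mono ball_subset_closedBall) hclosed hy
  rcases (mem_closedBall.mp hz).lt_or_eq with h | h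
  · exact ⟨z, h, rfl⟩
  · exact absurd hyS (hsphere z h)

section Nearest

open scoped InnerProductSpace

variable {E F : Type*} [NormedAddCommGroup E] [InnerProductSpace ℂ E]
  [NormedAddCommGroup F] [InnerProductSpace ℂ F]
  {f : E → F} {M : E →L[ℂ] F} {e : E} {q : F}

lemma re_inner_fderiv_nonpos {v : E} (hM : HasFDerivAt f M e)
    (hmin : ∀ᶠ t : ℝ in 𝓝[>] 0, ‖f e - q‖ ≤ ‖f (e + t • v) - q‖) :
    (⟪q - f e, M v⟫_ℂ).re ≤ 0 := by
  have slope : Tendsto (fun t : ℝ => t⁻¹ • (f (e + t • v) - f e)) (𝓝[>] 0) (𝓝 (M v)) :=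
    ((hM.restrictScalars ℝ).hasLineDerivAt v).tendsto_slope_zero_right
  have rhs : Tendsto (fun t : ℝ => t * ‖t⁻¹ • (f (e + t • v) - f e)‖ ^ 2) (𝓝[>] 0) (𝓝 0) := by
    simpa using (tendsto_id.mono_left nhdsWithin_le_nhds).mul (slope.norm.pow 2)
  have lhs : Tendsto (fun t : ℝ => 2 * (⟪q - f e, t⁻¹ • (f (e + t • v) - f e)⟫_ℂ).re) (𝓝[>] 0)
      (𝓝 (2 * (⟪q - f e, M v⟫_ℂ).re)) :=
    ((Complex.continuous_re.tendsto _).comp (tendsto_const_nhds.inner (𝕜 := ℂ) slope)).const_mul 2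
  suffices h : 2 * (⟪q - f e, M v⟫_ℂ).re ≤ 0 by linarith
  refine le_of_tendsto_of_tendsto lhs rhs ?_
  filter_upwards [hmin, self_mem_nhdsWithin] with t ht (ht0 : 0 < t)
  obtain ⟨w, hw⟩ : ∃ w, f (e + t • v) = f e + t • w :=
    ⟨t⁻¹ • (f (e + t • v) - f e), by rw [smul_inv_smul₀ ht0.ne', add_sub_cancel]⟩
  have expand : ‖f e + t • w - q‖ ^ 2 =
      ‖f e - q‖ ^ 2 + t * (t * ‖w‖ ^ 2 - 2 * (⟪q - f e, w⟫_ℂ).re) := by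
    rw [show f e + t • w - q = t • w - (q - f e) by abel, @norm_sub_sq ℂ,
      ← inner_conj_symm, ← Complex.coe_smul, inner_smul_right, norm_smul, norm_sub_rev q,
      Complex.norm_of_nonneg ht0.le]
    simp only [RCLike.re_to_complex, Complex.conj_re, Complex.re_ofReal_mul]
    ring
  have := pow_le_pow_left₀ (norm_nonneg _) ht 2
  rw [hw, expand, le_add_iff_nonneg_right, mul_nonneg_iff_of_pos_left ht0] at this
  rw [hw, add_sub_cancel_left, inv_smul_smul₀ ht0.ne']
  linarith

-- The first-order condition says that `e` maximises `Re ⟪M† (q - f e), ·⟫` over the unit ball.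
lemma exists_inner_fderiv_eq_mul_inner [CompleteSpace E] [CompleteSpace F] (he : ‖e‖ ≤ 1)
    (hM : HasFDerivAt f M e) (hsurj : Function.Surjective M) (hq : q ≠ f e)
    (hmin : ∀ z, ‖z‖ ≤ 1 → ‖f e - q‖ ≤ ‖f z - q‖) :
    ‖e‖ = 1 ∧ ∃ a : ℝ, 0 < a ∧ ∀ v, ⟪q - f e, M v⟫_ℂ = a * ⟪e, v⟫_ℂ := by
  set g := ContinuousLinearMap.adjoint M (q - f e)
  have inner_g (v : E) : ⟪g, v⟫_ℂ = ⟪q - f e, M v⟫_ℂ := M.adjoint_inner_left v (q - f e)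
  have max_at_e (z : E) (hz : ‖z‖ ≤ 1) : (⟪g, z⟫_ℂ).re ≤ (⟪g, e⟫_ℂ).re := by
    rw [← sub_nonpos, ← Complex.sub_re, ← inner_sub_right, inner_g]
    refine re_inner_fderiv_nonpos hM ?_
    filter_upwards [Ioo_mem_nhdsGT zero_lt_one] with t ht
    refine hmin _ (mem_closedBall_zero_iff.mp ?_)
    exact (convex_closedBall (0 : E) 1).add_smul_sub_mem (by simpa using he) (by simpa using hz)
      ⟨ht.1.le, ht.2.le⟩
  have hg0 : g ≠ 0 := by
    intro h0
    obtain ⟨v, hv⟩ := hsurj (q - f e)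
    have := inner_g v
    rw [h0, hv, inner_zero_left] at this
    exact hq (sub_eq_zero.mp (inner_self_eq_zero.mp this.symm))
  have hg0' : 0 < ‖g‖ := norm_pos_iff.mpr hg0
  have norm_le : ‖g‖ ≤ (⟪g, e⟫_ℂ).re := by
    convert max_at_e (((‖g‖⁻¹ : ℝ) : ℂ) • g) ?_ using 1
    · rw [inner_smul_right, Complex.re_ofReal_mul, ← RCLike.re_to_complex,
        inner_self_eq_norm_sq, pow_two, inv_mul_cancel_left₀ hg0'.ne']
    · rw [norm_smul, Complex.norm_of_nonneg (by positivity), inv_mul_cancel₀ hg0'.ne']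
  have he1 : ‖e‖ = 1 := le_antisymm he <| by
    refine le_of_mul_le_mul_left ?_ hg0'
    rw [mul_one]
    exact norm_le.trans (re_inner_le_norm (𝕜 := ℂ) g e)
  have hge : g = (‖g‖ : ℂ) • e := by
    rw [← sub_eq_zero, ← norm_eq_zero, ← sq_eq_zero_iff]
    refine le_antisymm ?_ (sq_nonneg _)
    rw [@norm_sub_sq ℂ, inner_smul_right, norm_smul, he1, Complex.norm_of_nonneg (norm_nonneg g)]
    simp only [RCLike.re_to_complex, Complex.re_ofReal_mul]
    nlinarith
  refine ⟨he1, ‖g‖, hg0', fun v => ?_⟩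
  rw [← inner_g, hge, inner_smul_left, Complex.conj_ofReal, ← hge]

end Nearest

section Bubble

open scoped InnerProductSpace

variable {E : Type*} [NormedAddCommGroup E] [InnerProductSpace ℂ E] {e : E} {s : ℝ} {z y : E}

/-- For a unit vector `e`, the orthogonal projection onto the complement of `ℂ e`. -/
noncomputable def perp (e : E) : E →L[ℂ] E :=
  ContinuousLinearMap.id ℂ E - (innerSL ℂ e).smulRight e

lemma perp_apply (e z : E) : perp e z = z - ⟪e, z⟫_ℂ • e := by
  simp [perp]

lemma inner_smul_add_perp (e z : E) : ⟪e, z⟫_ℂ • e + perp e z = z := by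
  rw [perp_apply, add_sub_cancel]

lemma inner_perp (he : ‖e‖ = 1) (z : E) : ⟪e, perp e z⟫_ℂ = 0 := by
  rw [perp_apply, inner_sub_right, inner_smul_right, inner_self_eq_one_of_norm_eq_one he, mul_one,
    sub_self]

lemma norm_smul_add_sq_of_inner_eq_zero (he : ‖e‖ = 1) {p : E} (hp : ⟪e, p⟫_ℂ = 0) (a : ℂ) :
    ‖a • e + p‖ ^ 2 = ‖a‖ ^ 2 + ‖p‖ ^ 2 := by
  rw [@norm_add_sq ℂ, inner_smul_left, hp, norm_smul, he]
  simp

lemma norm_perp_sq (he : ‖e‖ = 1) (z : E) : ‖perp e z‖ ^ 2 = ‖z‖ ^ 2 - ‖⟪e, z⟫_ℂ‖ ^ 2 := by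
  have := norm_smul_add_sq_of_inner_eq_zero he (inner_perp he z) ⟪e, z⟫_ℂ
  rw [inner_smul_add_perp] at this
  linarith

lemma norm_perp_le (he : ‖e‖ = 1) (z : E) : ‖perp e z‖ ≤ ‖z‖ :=
  le_of_sq_le_sq (by rw [norm_perp_sq he]; linarith [sq_nonneg ‖⟪e, z⟫_ℂ‖]) (norm_nonneg z)

/-- The height of `z` below the tangent hyperplane of the unit sphere at `e`, shifted by
`(3/4 s)²` so that it avoids zero on the closed unit ball. -/
noncomputable def height (e : E) (s : ℝ) (z : E) : ℂ := 1 + ((3 / 4 * s) ^ 2 : ℝ) - ⟪e, z⟫_ℂ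

/-- The bubble map with pole `e` at scale `s`: a map of the closed unit ball that is small away
from `e` but blows a neighbourhood of `e` up to a region comparable with the unit ball around `e`.
The factor `3/4` in `height` is chosen so that this region lies in `closedBall e 1`. -/
noncomputable def bubble (e : E) (s : ℝ) (z : E) : E :=
  ((s : ℂ) / (height e s z).sqrt) • e + ((s : ℂ) / height e s z) • perp e z

lemma height_sub_height (e : E) (s : ℝ) (z y : E) :
    height e s z - height e s y = -⟪e, z - y⟫_ℂ := by
  simp only [height, inner_sub_right]; ring

lemma re_height (e : E) (s : ℝ) (z : E) :
    (height e s z).re = 1 + (3 / 4 * s) ^ 2 - (⟪e, z⟫_ℂ).re := by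
  simp only [height, Complex.sub_re, Complex.add_re, Complex.one_re, Complex.ofReal_re]

lemma sq_le_re_height (he : ‖e‖ = 1) (s : ℝ) (hz : ‖z‖ ≤ 1) :
    (3 / 4 * s) ^ 2 ≤ (height e s z).re := by
  have : (⟪e, z⟫_ℂ).re ≤ ‖e‖ * ‖z‖ := re_inner_le_norm (𝕜 := ℂ) e z
  rw [re_height]
  rw [he, one_mul] at this
  linarith

lemma re_height_pos (he : ‖e‖ = 1) (hs : 0 < s) (hz : ‖z‖ ≤ 1) : 0 < (height e s z).re :=
  lt_of_lt_of_le (by positivity) (sq_le_re_height he s hz)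

lemma norm_sub_sq_le_re_height (he : ‖e‖ = 1) (s : ℝ) (hz : ‖z‖ ≤ 1) :
    ‖z - e‖ ^ 2 ≤ 2 * (height e s z).re := by
  rw [re_height, @norm_sub_sq ℂ, he, ← inner_conj_symm]
  simp only [RCLike.re_to_complex, Complex.conj_re]
  nlinarith [norm_nonneg z, sq_nonneg (3 / 4 * s)]

lemma norm_perp_sq_eq_height (he : ‖e‖ = 1) (s : ℝ) (z : E) :
    ‖perp e z‖ ^ 2 = ‖z‖ ^ 2 - 1 + 2 * ((height e s z).re - (3 / 4 * s) ^ 2) -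
      ‖height e s z - ((3 / 4 * s) ^ 2 : ℝ)‖ ^ 2 := by
  rw [norm_perp_sq he, re_height, show height e s z - ((3 / 4 * s) ^ 2 : ℝ) = 1 - ⟪e, z⟫_ℂ by
    rw [height]; ring]
  simp only [norm_sq_eq_re_sq_add_im_sq, Complex.sub_re, Complex.sub_im, Complex.one_re,
    Complex.one_im]
  ring

lemma norm_perp_sq_le (he : ‖e‖ = 1) (s : ℝ) (hz : ‖z‖ ≤ 1) :
    ‖perp e z‖ ^ 2 ≤ 2 * ((height e s z).re - (3 / 4 * s) ^ 2) := by
  rw [norm_perp_sq_eq_height he s]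
  linarith [pow_le_one₀ (n := 2) (norm_nonneg z) hz,
    sq_nonneg ‖height e s z - ((3 / 4 * s) ^ 2 : ℝ)‖]

lemma norm_bubble_sub_sq (he : ‖e‖ = 1) (s : ℝ) (z : E) :
    ‖bubble e s z - e‖ ^ 2 = ‖(s : ℂ) / (height e s z).sqrt - 1‖ ^ 2 +
      s ^ 2 * ‖perp e z‖ ^ 2 / ‖(height e s z).sqrt ^ 2‖ ^ 2 := by
  have : bubble e s z - e = ((s : ℂ) / (height e s z).sqrt - 1) • e +
      ((s : ℂ) / height e s z) • perp e z := by
    rw [bubble, sub_smul, one_smul]; abel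
  have hperp : ⟪e, ((s : ℂ) / height e s z) • perp e z⟫_ℂ = 0 := by
    rw [inner_smul_right, inner_perp he, mul_zero]
  rw [this, norm_smul_add_sq_of_inner_eq_zero he hperp, norm_smul, norm_div,
    Complex.norm_real, Real.norm_eq_abs, mul_pow, div_pow, sq_abs, sqrt_sq, div_mul_eq_mul_div]

lemma norm_bubble_sub_le_one (he : ‖e‖ = 1) (hs : 0 < s) (hz : ‖z‖ ≤ 1) :
    ‖bubble e s z - e‖ ≤ 1 := by
  have hu := re_height_pos he hs hz
  refine le_of_sq_le_sq ?_ zero_le_one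
  rw [norm_bubble_sub_sq he, one_pow]
  refine norm_div_sub_one_sq_add_le_one hs.le (sqrt_mem_sector hu) (sqrt_ne_zero hu) ?_
  rw [sqrt_sq]
  exact norm_perp_sq_le he s hz

lemma one_div_le_norm_bubble_sub (he : ‖e‖ = 1) (hs : 0 < s) (hs' : (3 / 4 * s) ^ 2 ≤ 1 / 10)
    (hz : ‖z‖ = 1) : 1 / 8 ≤ ‖bubble e s z - e‖ := by
  refine le_of_sq_le_sq ?_ (norm_nonneg _)
  rw [norm_bubble_sub_sq he, show ((1 : ℝ) / 8) ^ 2 = 1 / 64 by norm_num]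
  refine one_div_le_norm_div_sub_one_sq_add (sqrt_ne_zero (re_height_pos he hs hz.le)) hs' ?_ ?_
    (sq_nonneg _) <;> rw [sqrt_sq]
  · exact sq_le_re_height he s hz.le
  · rw [norm_perp_sq_eq_height he s, hz]
    linarith

lemma bubble_center (he : ‖e‖ = 1) (hs : 0 < s) :
    bubble e s (((1 - 7 / 16 * s ^ 2 : ℝ) : ℂ) • e) = e := by
  have hee := inner_self_eq_one_of_norm_eq_one (𝕜 := ℂ) he
  have height_eq : height e s (((1 - 7 / 16 * s ^ 2 : ℝ) : ℂ) • e) = (s : ℂ) ^ 2 := by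
    rw [height, inner_smul_right, hee]; push_cast; ring
  have sqrt_eq : ((s : ℂ) ^ 2).sqrt = s := by
    rw [← Complex.ofReal_pow, Complex.sqrt_of_nonneg (by exact_mod_cast sq_nonneg s)]
    simp [-Complex.ofReal_pow, Real.sqrt_sq hs.le]
  have perp_eq : perp e (((1 - 7 / 16 * s ^ 2 : ℝ) : ℂ) • e) = 0 := by
    rw [map_smul, perp_apply, hee, one_smul, sub_self, smul_zero]
  rw [bubble, height_eq, sqrt_eq, perp_eq, smul_zero, add_zero,
    div_self (Complex.ofReal_ne_zero.mpr hs.ne'), one_smul]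

lemma contDiffOn_bubble (he : ‖e‖ = 1) (hs : 0 < s) :
    ContDiffOn ℂ 1 (bubble e s) (closedBall 0 1) := by
  intro z hz
  have hu := re_height_pos he hs (mem_closedBall_zero_iff.mp hz)
  have hu0 : height e s z ≠ 0 := fun h => by simp [h] at hu
  have contDiff_height : ContDiffAt ℂ 1 (height e s) z :=
    contDiffAt_const.sub (innerSL ℂ e).contDiff.contDiffAt
  have contDiff_sqrt : ContDiffAt ℂ 1 (fun z => (height e s z).sqrt) z :=
    ((analyticAt_id.cpow analyticAt_const (Or.inl hu)).contDiffAt (x := height e s z)).comp z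
      contDiff_height
  exact (((contDiffAt_const.div contDiff_sqrt (sqrt_ne_zero hu)).smul contDiffAt_const).add
    ((contDiffAt_const.div contDiff_height hu0).smul
      (perp e).contDiff.contDiffAt)).contDiffWithinAt

lemma bubble_sub_bubble (e : E) (s : ℝ) (z y : E) :
    bubble e s z - bubble e s y =
      ((s : ℂ) * ((height e s z).sqrt⁻¹ - (height e s y).sqrt⁻¹)) • e +
        ((s : ℂ) * ((height e s z)⁻¹ - (height e s y)⁻¹)) • perp e z +
        ((s : ℂ) / height e s y) • perp e (z - y) := by
  simp only [bubble, map_sub, div_eq_mul_inv]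
  module

end Bubble

section BubbleExpansion

open scoped InnerProductSpace

variable {E : Type*} [NormedAddCommGroup E] [InnerProductSpace ℂ E] {e : E} {s : ℝ} {z y : E}

lemma inner_bubble (he : ‖e‖ = 1) (s : ℝ) (z : E) :
    ⟪e, bubble e s z⟫_ℂ = s * (height e s z).sqrt⁻¹ := by
  rw [bubble, inner_add_right, inner_smul_right, inner_smul_right, inner_perp he,
    inner_self_eq_one_of_norm_eq_one he, mul_one, mul_zero, add_zero, div_eq_mul_inv]

lemma norm_inner_le (he : ‖e‖ = 1) (z : E) : ‖⟪e, z⟫_ℂ‖ ≤ ‖z‖ := by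
  simpa only [he, one_mul] using norm_inner_le_norm (𝕜 := ℂ) e z

lemma normal_component_le {A : E →L[ℂ] E} {b : ℝ} (he : ‖e‖ = 1) (hs : 0 < s) (hb : 0 ≤ b)
    (hA : ∀ v, ⟪e, A v⟫_ℂ = b * ⟪e, v⟫_ℂ) (hz : ‖z‖ ≤ 1) (hy : ‖y‖ ≤ 1) :
    b * ‖⟪e, z - y⟫_ℂ‖ + s * ‖(height e s z).sqrt⁻¹ - (height e s y).sqrt⁻¹‖ ≤
      3 * ‖A (z - y) + (bubble e s z - bubble e s y)‖ := by
  have hu := re_height_pos he hs hz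
  have hv := re_height_pos he hs hy
  have planar := add_norm_le_norm_sq_sub_sub_inv (sqrt_mem_sector hu) (sqrt_mem_sector hv)
    (sqrt_ne_zero hu) (sqrt_ne_zero hv) hb hs.le
  rw [sqrt_sq, sqrt_sq, height_sub_height, norm_neg] at planar
  refine planar.trans ?_
  rw [← norm_neg]
  gcongr
  refine le_of_eq_of_le ?_ (norm_inner_le he _)
  rw [inner_add_right, inner_sub_right e (bubble e s z), hA, inner_bubble he, inner_bubble he]
  ring_nf

lemma norm_inv_height_sub_mul_norm_perp_le (he : ‖e‖ = 1) (hs : 0 < s) (hz : ‖z‖ ≤ 1)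
    (hzy : ‖height e s z‖ ≤ ‖height e s y‖) :
    ‖(height e s z)⁻¹ - (height e s y)⁻¹‖ * ‖perp e z‖ ≤
      3 * ‖(height e s z).sqrt⁻¹ - (height e s y).sqrt⁻¹‖ := by
  have hu := re_height_pos he hs hz
  have sqrt_le : ‖(height e s z).sqrt‖ ≤ ‖(height e s y).sqrt‖ := by
    refine le_of_sq_le_sq ?_ (norm_nonneg _)
    rwa [← norm_pow, ← norm_pow, sqrt_sq, sqrt_sq]
  have inv_sub_le := norm_inv_sq_sub_inv_sq_le (sqrt_ne_zero hu) sqrt_le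
  rw [sqrt_sq, sqrt_sq] at inv_sub_le
  have perp_le : ‖perp e z‖ ≤ 3 / 2 * ‖(height e s z).sqrt‖ := by
    refine le_of_sq_le_sq ?_ (by positivity)
    rw [mul_pow, ← norm_pow, sqrt_sq]
    nlinarith [norm_perp_sq_le he s hz, Complex.re_le_norm (height e s z), sq_nonneg (3 / 4 * s),
      norm_nonneg (height e s z)]
  calc ‖(height e s z)⁻¹ - (height e s y)⁻¹‖ * ‖perp e z‖
      ≤ ‖(height e s z)⁻¹ - (height e s y)⁻¹‖ * (3 / 2 * ‖(height e s z).sqrt‖) := by gcongr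
    _ = 3 / 2 * (‖(height e s z).sqrt‖ * ‖(height e s z)⁻¹ - (height e s y)⁻¹‖) := by ring
    _ ≤ 3 / 2 * (2 * ‖(height e s z).sqrt⁻¹ - (height e s y).sqrt⁻¹‖) := by gcongr
    _ = _ := by ring

lemma mul_norm_le_norm_add_smul {l : ℝ} {p q : E} {β : ℂ}
    (h : l * ‖p‖ ^ 2 ≤ (⟪p, q⟫_ℂ).re) (hβ : 0 ≤ β.re) : l * ‖p‖ ≤ ‖q + β • p‖ := by
  rcases (norm_nonneg p).eq_or_lt with hp | hp
  · rw [← hp, mul_zero]; exact norm_nonneg _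
  refine le_of_mul_le_mul_right ?_ hp
  calc l * ‖p‖ * ‖p‖ ≤ (⟪p, q⟫_ℂ).re + β.re * ‖p‖ ^ 2 := by nlinarith [mul_nonneg hβ hp.le]
    _ = (⟪p, q + β • p⟫_ℂ).re := by
      rw [inner_add_right, inner_smul_right, inner_self_eq_norm_sq_to_K, Complex.add_re]
      simp [← Complex.ofReal_pow]
    _ ≤ ‖p‖ * ‖q + β • p‖ := re_inner_le_norm (𝕜 := ℂ) _ _
    _ = ‖q + β • p‖ * ‖p‖ := mul_comm _ _

lemma mul_norm_perp_le {A : E →L[ℂ] E} {l : ℝ} (he : ‖e‖ = 1) (hs : 0 < s)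
    (hl : ∀ v, ⟪e, v⟫_ℂ = 0 → l * ‖v‖ ^ 2 ≤ (⟪v, A v⟫_ℂ).re) (hy : ‖y‖ ≤ 1) :
    l * ‖perp e (z - y)‖ ≤ ‖A (z - y) + (bubble e s z - bubble e s y) - ⟪e, z - y⟫_ℂ • A e -
      ((s : ℂ) * ((height e s z).sqrt⁻¹ - (height e s y).sqrt⁻¹)) • e -
      ((s : ℂ) * ((height e s z)⁻¹ - (height e s y)⁻¹)) • perp e z‖ := by
  have hv := re_height_pos he hs hy
  have hv_re : 0 ≤ ((s : ℂ) / height e s y).re := by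
    rw [Complex.div_re, Complex.ofReal_re, Complex.ofReal_im, zero_mul, zero_div, add_zero]
    exact div_nonneg (mul_nonneg hs.le hv.le) (Complex.normSq_nonneg _)
  refine (mul_norm_le_norm_add_smul (hl _ (inner_perp he (z - y))) hv_re).trans_eq ?_
  have A_split : A (z - y) = ⟪e, z - y⟫_ℂ • A e + A (perp e (z - y)) := by
    rw [← map_smul, ← map_add, inner_smul_add_perp]
  rw [bubble_sub_bubble, A_split]
  congr 1
  abel

lemma tangential_component_le {A : E →L[ℂ] E} {b l : ℝ} (he : ‖e‖ = 1) (hs : 0 < s) (hb : 0 < b)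
    (hA : ∀ v, ⟪e, A v⟫_ℂ = b * ⟪e, v⟫_ℂ)
    (hl : ∀ v, ⟪e, v⟫_ℂ = 0 → l * ‖v‖ ^ 2 ≤ (⟪v, A v⟫_ℂ).re) (hz : ‖z‖ ≤ 1) (hy : ‖y‖ ≤ 1)
    (hzy : ‖height e s z‖ ≤ ‖height e s y‖) :
    l * ‖perp e (z - y)‖ ≤
      (13 + 3 * ‖A e‖ / b) * ‖A (z - y) + (bubble e s z - bubble e s y)‖ := by
  have normal := normal_component_le he hs hb.le hA hz hy
  have cross := norm_inv_height_sub_mul_norm_perp_le he hs hz hzy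
  refine (mul_norm_perp_le he hs hl hy).trans ?_
  set D := A (z - y) + (bubble e s z - bubble e s y)
  set ζ := ⟪e, z - y⟫_ℂ
  set α := (height e s z).sqrt⁻¹ - (height e s y).sqrt⁻¹
  set γ := (height e s z)⁻¹ - (height e s y)⁻¹
  have hζ : ‖ζ‖ ≤ 3 * ‖D‖ / b := by
    rw [le_div_iff₀ hb]
    nlinarith [mul_nonneg hs.le (norm_nonneg α)]
  have hα : s * ‖α‖ ≤ 3 * ‖D‖ := by nlinarith [mul_nonneg hb.le (norm_nonneg ζ)]
  calc ‖D - ζ • A e - ((s : ℂ) * α) • e - ((s : ℂ) * γ) • perp e z‖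
      ≤ ‖D‖ + ‖ζ‖ * ‖A e‖ + s * ‖α‖ + s * (‖γ‖ * ‖perp e z‖) := by
        refine (norm_sub_le _ _).trans (add_le_add ((norm_sub_le _ _).trans
          (add_le_add ((norm_sub_le _ _).trans_eq ?_) (le_of_eq ?_))) (le_of_eq ?_)) <;>
        simp only [norm_smul, norm_mul, Complex.norm_of_nonneg hs.le, he, mul_one, mul_assoc]
    _ ≤ ‖D‖ + (3 * ‖D‖ / b) * ‖A e‖ + 3 * ‖D‖ + s * (3 * ‖α‖) := by gcongr
    _ = (4 + 3 * ‖A e‖ / b) * ‖D‖ + 3 * (s * ‖α‖) := by ring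
    _ ≤ (4 + 3 * ‖A e‖ / b) * ‖D‖ + 3 * (3 * ‖D‖) := by gcongr
    _ = (13 + 3 * ‖A e‖ / b) * ‖D‖ := by ring

-- The factor does not depend on `s`: the bubble never works against the linear map `A`.
lemma exists_expandsOn_add_bubble {A : E →L[ℂ] E} {b l : ℝ} (he : ‖e‖ = 1) (hb : 0 < b)
    (hA : ∀ v, ⟪e, A v⟫_ℂ = b * ⟪e, v⟫_ℂ) (hl0 : 0 < l)
    (hl : ∀ v, ⟪e, v⟫_ℂ = 0 → l * ‖v‖ ^ 2 ≤ (⟪v, A v⟫_ℂ).re) :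
    ∃ k > 0, ∀ s > 0, ExpandsOn k (⇑A + bubble e s) (closedBall 0 1) := by
  set C := 3 / b + (13 + 3 * ‖A e‖ / b) / l with hC
  have hC0 : 0 < C := by positivity
  have bound (s : ℝ) (hs : 0 < s) (z y : E) (hz : ‖z‖ ≤ 1) (hy : ‖y‖ ≤ 1)
      (hzy : ‖height e s z‖ ≤ ‖height e s y‖) :
      C⁻¹ * ‖z - y‖ ≤ ‖(⇑A + bubble e s) z - (⇑A + bubble e s) y‖ := by
    rw [show (⇑A + bubble e s) z - (⇑A + bubble e s) y =
      A (z - y) + (bubble e s z - bubble e s y) by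
        simp only [Pi.add_apply, map_sub]; abel,
      inv_mul_le_iff₀ hC0, hC, add_mul, div_mul_eq_mul_div, div_mul_eq_mul_div]
    have normal := normal_component_le he hs hb.le hA hz hy
    have tangential := tangential_component_le he hs hb hA hl hz hy hzy
    have split : ‖z - y‖ ≤ ‖⟪e, z - y⟫_ℂ‖ + ‖perp e (z - y)‖ := by
      conv_lhs => rw [← inner_smul_add_perp e (z - y)]
      refine (norm_add_le _ _).trans_eq ?_
      rw [norm_smul, he, mul_one]
    refine split.trans (add_le_add ?_ ?_)
    · rw [le_div_iff₀ hb]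
      nlinarith [mul_nonneg hs.le
        (norm_nonneg ((height e s z).sqrt⁻¹ - (height e s y).sqrt⁻¹))]
    · rwa [le_div_iff₀ hl0, mul_comm]
  refine ⟨C⁻¹, inv_pos.mpr hC0, fun s hs z hz y hy => ?_⟩
  rw [mem_closedBall_zero_iff] at hz hy
  rcases le_total ‖height e s z‖ ‖height e s y‖ with h | h
  · exact bound s hs z y hz hy h
  · rw [norm_sub_rev z, norm_sub_rev ((⇑A + bubble e s) z)]
    exact bound s hs y z hy hz h

end BubbleExpansion

section BubbleFar

open scoped InnerProductSpace

variable {E : Type*} [NormedAddCommGroup E] [InnerProductSpace ℂ E] {e : E} {s δ : ℝ} {z y : E}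

lemma sq_half_le_norm_height (he : ‖e‖ = 1) (s : ℝ) (hδ : 0 ≤ δ) (hz : ‖z‖ ≤ 1)
    (hδz : δ ≤ ‖z - e‖) : (δ / 2) ^ 2 ≤ ‖height e s z‖ := by
  nlinarith [norm_sub_sq_le_re_height he s hz, Complex.re_le_norm (height e s z)]

lemma half_le_norm_sqrt_height (he : ‖e‖ = 1) (s : ℝ) (hδ : 0 ≤ δ) (hz : ‖z‖ ≤ 1)
    (hδz : δ ≤ ‖z - e‖) : δ / 2 ≤ ‖(height e s z).sqrt‖ := by
  refine le_of_sq_le_sq ?_ (norm_nonneg _)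
  rw [← norm_pow, sqrt_sq]
  exact sq_half_le_norm_height he s hδ hz hδz

lemma norm_bubble_le (he : ‖e‖ = 1) (hs : 0 < s) (hδ : 0 < δ) (hz : ‖z‖ ≤ 1)
    (hδz : δ ≤ ‖z - e‖) : ‖bubble e s z‖ ≤ s * (1 / (δ / 2) + 1 / (δ / 2) ^ 2) := by
  have hu := sq_half_le_norm_height he s hδ.le hz hδz
  have hx := half_le_norm_sqrt_height he s hδ.le hz hδz
  have hp := (norm_perp_le he z).trans hz
  calc ‖bubble e s z‖
      ≤ s / ‖(height e s z).sqrt‖ * ‖e‖ + s / ‖height e s z‖ * ‖perp e z‖ := by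
        refine (norm_add_le _ _).trans_eq ?_
        simp only [norm_smul, norm_div, Complex.norm_of_nonneg hs.le]
    _ ≤ s / (δ / 2) * 1 + s / (δ / 2) ^ 2 * 1 := by gcongr; exact he.le
    _ = s * (1 / (δ / 2) + 1 / (δ / 2) ^ 2) := by ring

lemma norm_bubble_sub_bubble_le (he : ‖e‖ = 1) (hs : 0 < s) (hδ : 0 < δ) (hz : ‖z‖ ≤ 1)
    (hy : ‖y‖ ≤ 1) (hδz : δ ≤ ‖z - e‖) (hδy : δ ≤ ‖y - e‖) :
    ‖bubble e s z - bubble e s y‖ ≤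
      s * (1 / (δ / 2) ^ 3 + 1 / (δ / 2) ^ 4 + 1 / (δ / 2) ^ 2) * ‖z - y‖ := by
  have hv := sq_half_le_norm_height he s hδ.le hy hδy
  have hp := (norm_perp_le he z).trans hz
  have height_sub : ‖height e s z - height e s y‖ ≤ ‖z - y‖ := by
    rw [height_sub_height, norm_neg]; exact norm_inner_le he _
  have sqrt_inv_sub : ‖(height e s z).sqrt⁻¹ - (height e s y).sqrt⁻¹‖ ≤ ‖z - y‖ / (δ / 2) ^ 3 := by
    refine (norm_inv_sub_inv_le_of_mem_sector (half_pos hδ)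
      (sqrt_mem_sector (re_height_pos he hs hz)) (sqrt_mem_sector (re_height_pos he hs hy))
      (half_le_norm_sqrt_height he s hδ.le hz hδz)
      (half_le_norm_sqrt_height he s hδ.le hy hδy)).trans ?_
    rw [sqrt_sq, sqrt_sq]
    gcongr
  have inv_sub : ‖(height e s z)⁻¹ - (height e s y)⁻¹‖ ≤ ‖z - y‖ / (δ / 2) ^ 4 := by
    refine (norm_inv_sub_inv_le (pow_pos (half_pos hδ) 2)
      (sq_half_le_norm_height he s hδ.le hz hδz) hv).trans ?_
    rw [← pow_mul]
    gcongr
  calc ‖bubble e s z - bubble e s y‖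
      ≤ s * ‖(height e s z).sqrt⁻¹ - (height e s y).sqrt⁻¹‖ * ‖e‖ +
          s * ‖(height e s z)⁻¹ - (height e s y)⁻¹‖ * ‖perp e z‖ +
          s / ‖height e s y‖ * ‖perp e (z - y)‖ := by
        rw [bubble_sub_bubble]
        refine (norm_add₃_le).trans_eq ?_
        simp only [norm_smul, norm_mul, norm_div, Complex.norm_of_nonneg hs.le]
    _ ≤ s * (‖z - y‖ / (δ / 2) ^ 3) * 1 + s * (‖z - y‖ / (δ / 2) ^ 4) * 1 +
          s / (δ / 2) ^ 2 * ‖z - y‖ := by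
        gcongr
        · exact he.le
        · exact norm_perp_le he _
    _ = _ := by ring

lemma tendsto_mul_const_nhdsGT_zero (C : ℝ) : Tendsto (fun s : ℝ => s * C) (𝓝[>] 0) (𝓝 0) := by
  have : Tendsto (fun s : ℝ => s * C) (𝓝 0) (𝓝 (0 * C)) := tendsto_id.mul_const C
  rw [zero_mul] at this
  exact this.mono_left nhdsWithin_le_nhds

lemma eventually_norm_bubble_le (he : ‖e‖ = 1) (hδ : 0 < δ) {η : ℝ} (hη : 0 < η) :
    ∀ᶠ s in 𝓝[>] 0, ∀ z, ‖z‖ ≤ 1 → δ ≤ ‖z - e‖ → ‖bubble e s z‖ ≤ η := by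
  filter_upwards [(tendsto_mul_const_nhdsGT_zero _).eventually_le_const hη,
    self_mem_nhdsWithin] with s hs hs0 z hz hδz
  exact (norm_bubble_le he hs0 hδ hz hδz).trans hs

lemma eventually_lipschitzOnWith_bubble (he : ‖e‖ = 1) (hδ : 0 < δ) {K : NNReal} (hK : 0 < K) :
    ∀ᶠ s in 𝓝[>] 0, LipschitzOnWith K (bubble e s) (closedBall 0 1 \ ball e δ) := by
  filter_upwards [(tendsto_mul_const_nhdsGT_zero _).eventually_le_const (NNReal.coe_pos.mpr hK),
    self_mem_nhdsWithin] with s hs hs0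
  refine LipschitzOnWith.of_dist_le_mul fun z hz y hy => ?_
  simp only [Set.mem_sdiff, mem_closedBall_zero_iff, mem_ball, not_lt, dist_eq_norm] at hz hy
  rw [dist_eq_norm, dist_eq_norm]
  refine (norm_bubble_sub_bubble_le he hs0 hδ hz.1 hy.1 hz.2 hy.2).trans ?_
  gcongr

end BubbleFar

section Polar

open scoped InnerProductSpace

variable {E : Type*} [NormedAddCommGroup E] [InnerProductSpace ℂ E] {e n : E}

lemma apply_eq_self_of_isPositive {P : E →L[ℂ] E} (hP : P.IsPositive) (h : P (P e) = e) :
    P e = e := by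
  have anti : P (P e - e) = -(P e - e) := by rw [map_sub, h, neg_sub]
  have := hP.re_inner_nonneg_left (P e - e)
  rw [anti, inner_neg_left, map_neg, Left.nonneg_neg_iff] at this
  exact sub_eq_zero.mp (re_inner_self_nonpos.mp this)

lemma exists_mul_norm_sq_le_re_inner [CompleteSpace E] {P : E →L[ℂ] E}
    (hP : IsStrictlyPositive P) : ∃ l > 0, ∀ v, l * ‖v‖ ^ 2 ≤ (⟪v, P v⟫_ℂ).re := by
  rcases subsingleton_or_nontrivial E with _ | _
  · exact ⟨1, one_pos, fun v => by simp [Subsingleton.elim v 0]⟩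
  obtain ⟨l, hl, hle⟩ := (CFC.exists_pos_algebraMap_le_iff hP.isSelfAdjoint).mpr
    fun x hx => hP.spectrum_pos hx
  refine ⟨l, hl, fun v => ?_⟩
  have := ((ContinuousLinearMap.le_def _ _).mp hle).re_inner_nonneg_right v
  rw [sub_apply, inner_sub_right, map_sub, sub_nonneg] at this
  refine le_of_eq_of_le ?_ this
  rw [Algebra.algebraMap_eq_smul_one, smul_apply, one_apply_eq_self, ← Complex.coe_smul,
    inner_smul_right, RCLike.re_to_complex, Complex.re_ofReal_mul, ← RCLike.re_to_complex,
    inner_self_eq_norm_sq]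

lemma exists_polar_decomposition [CompleteSpace E] {T : E →L[ℂ] E} (hT : IsUnit T) :
    ∃ (W : E ≃ₗᵢ[ℂ] E) (P : E →L[ℂ] E), IsStrictlyPositive P ∧ P * P = star T * T ∧
      ∀ v, T v = W (P v) := by
  have hP0 : 0 ≤ CFC.abs T := CFC.abs_nonneg T
  have hPP : CFC.abs T * CFC.abs T = star T * T := CFC.abs_mul_abs T
  have hPunit : IsUnit (CFC.abs T) :=
    ((Commute.refl _).isUnit_mul_iff.mp (hPP ▸ hT.star.mul hT)).1
  obtain ⟨T, rfl⟩ := hT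
  obtain ⟨P, hP⟩ := hPunit
  rw [← hP] at hP0 hPP
  have hunitary : (T * ((P⁻¹ : (E →L[ℂ] E)ˣ) : E →L[ℂ] E) : E →L[ℂ] E) ∈ unitary (E →L[ℂ] E) := by
    refine (Units.mul_inv_mem_unitary T P).mpr (Units.ext ?_)
    rw [Units.val_mul, Units.val_mul, Units.coe_star, Units.coe_star, ← hPP,
      hP0.isSelfAdjoint.star_eq]
  refine ⟨Unitary.linearIsometryEquiv ⟨_, hunitary⟩, P, P.isUnit.isStrictlyPositive hP0, hPP,
    fun v => ?_⟩
  change (T : E →L[ℂ] E) v = (T : E →L[ℂ] E) ((((P⁻¹ : (E →L[ℂ] E)ˣ) : E →L[ℂ] E) * P) v)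
  rw [P.inv_mul, one_apply_eq_self]

lemma exists_linearIsometryEquiv_le_re_inner [FiniteDimensional ℂ E] {M : E →L[ℂ] E} {b : ℝ}
    (he : ‖e‖ = 1) (hn : ‖n‖ = 1) (hinj : Function.Injective M)
    (hM : ∀ v, ⟪n, M v⟫_ℂ = b * ⟪e, v⟫_ℂ) :
    ∃ W : E ≃ₗᵢ[ℂ] E, W e = n ∧
      ∃ l > 0, ∀ v, ⟪e, v⟫_ℂ = 0 → l * ‖v‖ ^ 2 ≤ (⟪W v, M v⟫_ℂ).re := by
  have := FiniteDimensional.complete ℂ E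
  -- `T` agrees with `M` on `eᗮ`, while `T e = n` and `T† n = e`; hence `|T|` fixes `e`.
  let T : E →L[ℂ] E := M ∘L perp e + (innerSL ℂ e).smulRight n
  have hT (v : E) : T v = M (perp e v) + ⟪e, v⟫_ℂ • n := by simp [T]
  have hTe : T e = n := by
    rw [hT, perp_apply, inner_self_eq_one_of_norm_eq_one he, one_smul, sub_self, map_zero,
      zero_add, one_smul]
  have hTn (v : E) : ⟪n, T v⟫_ℂ = ⟪e, v⟫_ℂ := by
    rw [hT, inner_add_right, hM, inner_perp he, inner_smul_right,
      inner_self_eq_one_of_norm_eq_one hn, mul_zero, zero_add, mul_one]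
  have hTadj : (star T) n = e := ext_inner_right ℂ fun v => by
    rw [ContinuousLinearMap.star_eq_adjoint, ContinuousLinearMap.adjoint_inner_left, hTn]
  have hTinj : Function.Injective T := (injective_iff_map_eq_zero T).mpr fun v hv => by
    have hev : ⟪e, v⟫_ℂ = 0 := by rw [← hTn, hv, inner_zero_right]
    rw [hT, hev, zero_smul, add_zero, perp_apply, hev, zero_smul, sub_zero] at hv
    exact hinj (hv.trans (map_zero M).symm)
  have hTunit : IsUnit T := ContinuousLinearMap.isUnit_iff_bijective.mpr
    ⟨hTinj, (LinearMap.injective_iff_surjective (f := (T : E →ₗ[ℂ] E))).mp hTinj⟩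
  obtain ⟨W, P, hP, hPP, hWP⟩ := exists_polar_decomposition hTunit
  have hPe : P e = e := by
    refine apply_eq_self_of_isPositive
      ((ContinuousLinearMap.nonneg_iff_isPositive P).mp hP.nonneg) ?_
    rw [← mul_apply_eq_comp, hPP, mul_apply_eq_comp, hTe, hTadj]
  obtain ⟨l, hl, hle⟩ := exists_mul_norm_sq_le_re_inner hP
  refine ⟨W, by rw [← hTe, hWP, hPe], l, hl, fun v hv => ?_⟩
  have hTv : T v = M v := by
    rw [hT, hv, zero_smul, add_zero, perp_apply, hv, zero_smul, sub_zero]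
  rw [← hTv, hWP, W.inner_map_map]
  exact hle v

end Polar

section IsBallEmbedding

variable {E : Type*} [NormedAddCommGroup E] [NormedSpace ℂ E] {R r : ℝ} {V W : Set E} {F : E → E}
  {e : E}

/-- `F` embeds the open ball of radius `R` about the origin holomorphically into `V`, with Lipschitz
inverse. Holomorphy is encoded as complex `C¹`, the form used by the inverse function theorem. -/
structure IsBallEmbedding (R : ℝ) (V : Set E) (F : E → E) : Prop where
  contDiffOn : ContDiffOn ℂ 1 F (ball 0 R)
  exists_expandsOn : ∃ c > 0, ExpandsOn c F (ball 0 R)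
  mapsTo : Set.MapsTo F (ball 0 R) V

namespace IsBallEmbedding

lemma mono (h : IsBallEmbedding R V F) (hVW : V ⊆ W) : IsBallEmbedding R W F :=
  ⟨h.contDiffOn, h.exists_expandsOn, h.mapsTo.mono_right hVW⟩

lemma of_le (h : IsBallEmbedding R V F) (hr : r ≤ R) : IsBallEmbedding r V F := by
  obtain ⟨c, hc, hFc⟩ := h.exists_expandsOn
  have := ball_subset_ball (x := (0 : E)) hr
  exact ⟨h.contDiffOn.mono this, ⟨c, hc, hFc.mono this⟩, h.mapsTo.mono_left this⟩

lemma hasStrictFDerivAt (h : IsBallEmbedding R V F) (he : e ∈ ball 0 R) :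
    HasStrictFDerivAt F (fderiv ℂ F e) e :=
  (h.contDiffOn.contDiffAt (isOpen_ball.mem_nhds he)).hasStrictFDerivAt one_ne_zero

lemma injective_fderiv (h : IsBallEmbedding R V F) (he : e ∈ ball 0 R) :
    Function.Injective (fderiv ℂ F e) := by
  obtain ⟨c, hc, hFc⟩ := h.exists_expandsOn
  exact injective_of_le_norm (M := (fderiv ℂ F e : E →ₗ[ℂ] E).toAddMonoidHom) hc
    (hFc.le_norm_fderiv (isOpen_ball.mem_nhds he) (h.hasStrictFDerivAt he).hasFDerivAt)

lemma isOpen_image [FiniteDimensional ℂ E] (h : IsBallEmbedding R V F) :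
    IsOpen (F '' ball 0 R) := by
  obtain ⟨c, hc, hFc⟩ := h.exists_expandsOn
  exact hFc.isOpen_image hc isOpen_ball fun x hx => ⟨_, h.hasStrictFDerivAt hx⟩

end IsBallEmbedding

end IsBallEmbedding

lemma exists_forall_one_add_le {E : Type*} [NormedAddCommGroup E] [ProperSpace E]
    {F : E → E} {e : E} (hF : ContinuousOn F (closedBall 0 1))
    (hlt : ∀ z, ‖z‖ ≤ 1 → z ≠ e → 1 < ‖F z - e‖) {δ : ℝ} (hδ : 0 < δ) :
    ∃ μ > 0, ∀ z, ‖z‖ ≤ 1 → δ ≤ ‖z - e‖ → 1 + μ ≤ ‖F z - e‖ := by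
  have hcompact : IsCompact (closedBall (0 : E) 1 \ ball e δ) :=
    (isCompact_closedBall 0 1).diff isOpen_ball
  obtain ⟨r, hr, hle⟩ := hcompact.exists_forall_le' (a := 1) (f := fun z => ‖F z - e‖)
    ((hF.sub continuousOn_const).norm.mono Set.sdiff_subset) fun z hz =>
      hlt z (mem_closedBall_zero_iff.mp hz.1) (by rintro rfl; exact hz.2 (mem_ball_self hδ))
  refine ⟨r - 1, sub_pos.mpr hr, fun z hz hδz => ?_⟩
  rw [add_sub_cancel]
  exact hle z ⟨mem_closedBall_zero_iff.mpr hz, by simpa [dist_eq_norm] using hδz⟩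

section AddBubble

open scoped InnerProductSpace

variable {E : Type*} [NormedAddCommGroup E] [InnerProductSpace ℂ E] {F : E → E} {e z : E}

lemma norm_add_bubble_sub_le {s η : ℝ} (he : ‖e‖ = 1) (hs : 0 < s) (hz : ‖z‖ ≤ 1) (hη : ‖F z‖ ≤ η) :
    ‖(F + bubble e s) z - e‖ ≤ 1 + η := by
  rw [Pi.add_apply, add_sub_assoc]
  linarith [norm_add_le (F z) (bubble e s z - e), norm_bubble_sub_le_one he hs hz]

lemma norm_sub_le_norm_add_bubble_sub {s η : ℝ} (hη : ‖bubble e s z‖ ≤ η) :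
    ‖F z - e‖ - η ≤ ‖(F + bubble e s) z - e‖ := by
  rw [Pi.add_apply, add_sub_right_comm]
  linarith [norm_sub_le_norm_add (F z - e) (bubble e s z)]

lemma eventually_norm_le_or_norm_bubble_le (he : ‖e‖ = 1) (hFe : F e = 0)
    (hF : ContinuousWithinAt F (closedBall 0 1) e) {η : ℝ} (hη : 0 < η) :
    ∀ᶠ s in 𝓝[>] 0, ∀ z, ‖z‖ ≤ 1 → ‖F z‖ ≤ η ∨ ‖bubble e s z‖ ≤ η := by
  obtain ⟨δ, hδ, hFδ⟩ := Metric.continuousWithinAt_iff.mp hF η hη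
  filter_upwards [eventually_norm_bubble_le he hδ hη] with s hs z hz
  rcases lt_or_ge ‖z - e‖ δ with h | h
  · left
    simpa only [hFe, dist_zero_right] using
      (hFδ (mem_closedBall_zero_iff.mpr hz) (by rwa [dist_eq_norm])).le
  · exact Or.inr (hs z hz h)

lemma eventually_mapsTo_add_bubble [ProperSpace E] {V : Set E} (hV : IsOpen V) (he : ‖e‖ = 1)
    (hFe : F e = 0) (hF : ContinuousOn F (closedBall 0 1)) (hFV : Set.MapsTo F (closedBall 0 1) V)
    (hball : closedBall e 1 ⊆ V) :
    ∀ᶠ s in 𝓝[>] 0, Set.MapsTo (F + bubble e s) (closedBall 0 1) V := by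
  obtain ⟨η, hη, hηV⟩ := ((isCompact_closedBall e 1).union
    ((isCompact_closedBall 0 1).image_of_continuousOn hF)).exists_cthickening_subset_open hV
      (Set.union_subset hball hFV.image_subset)
  filter_upwards [eventually_norm_le_or_norm_bubble_le he hFe
    (hF e (mem_closedBall_zero_iff.mpr he.le)) hη, self_mem_nhdsWithin] with s hs hs0 z hz
  have hz' := mem_closedBall_zero_iff.mp hz
  refine hηV ?_
  rcases hs z hz' with h | h
  · refine mem_cthickening_of_dist_le _ (bubble e s z) _ _ (Or.inl ?_) ?_
    · rw [mem_closedBall, dist_eq_norm]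
      exact norm_bubble_sub_le_one he hs0 hz'
    · rwa [dist_eq_norm, Pi.add_apply, add_sub_cancel_right]
  · refine mem_cthickening_of_dist_le _ (F z) _ _ (Or.inr (Set.mem_image_of_mem F hz)) ?_
    rwa [dist_eq_norm, Pi.add_apply, add_sub_cancel_left]

lemma exists_expandsOn_near {M : E →L[ℂ] E} {b l : ℝ} (he : ‖e‖ = 1)
    (hM : HasStrictFDerivAt F M e) (hb : 0 < b) (hbM : ∀ v, ⟪e, M v⟫_ℂ = b * ⟪e, v⟫_ℂ)
    (hl : 0 < l) (hlM : ∀ v, ⟪e, v⟫_ℂ = 0 → l * ‖v‖ ^ 2 ≤ (⟪v, M v⟫_ℂ).re) :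
    ∃ k > 0, ∃ ρ > 0, ∀ s > 0, ExpandsOn k (F + bubble e s) (closedBall 0 1 ∩ ball e ρ) := by
  obtain ⟨k, hk, hexp⟩ := exists_expandsOn_add_bubble he hb hbM hl hlM
  obtain ⟨U, hU, happrox⟩ :=
    hM.approximates_deriv_on_nhds (Or.inr (Real.toNNReal_pos.mpr (half_pos hk)))
  obtain ⟨ρ, hρ, hρU⟩ := Metric.mem_nhds_iff.mp hU
  refine ⟨k / 2, half_pos hk, ρ, hρ, fun s hs => ?_⟩
  have hlip := happrox.lipschitzOnWith.mono
    ((Set.inter_subset_right (s := closedBall 0 1)).trans hρU)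
  convert ((hexp s hs).mono Set.inter_subset_left).add_lipschitzOnWith hlip using 1
  · rw [Real.coe_toNNReal _ (half_pos hk).le, sub_half]
  · ext z
    simp only [Pi.add_apply, Pi.sub_apply]
    abel

lemma eventually_expandsOn_far {c δ : ℝ} (he : ‖e‖ = 1) (hc : 0 < c)
    (hF : ExpandsOn c F (closedBall 0 1)) (hδ : 0 < δ) :
    ∀ᶠ s in 𝓝[>] 0, ExpandsOn (c / 2) (F + bubble e s) (closedBall 0 1 \ ball e δ) := by
  filter_upwards [eventually_lipschitzOnWith_bubble he hδ (Real.toNNReal_pos.mpr (half_pos hc))]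
    with s hs
  convert (hF.mono Set.sdiff_subset).add_lipschitzOnWith hs using 1
  rw [Real.coe_toNNReal _ (half_pos hc).le, sub_half]

lemma exists_eventually_separated [ProperSpace E] {ρ : ℝ} (he : ‖e‖ = 1) (hFe : F e = 0)
    (hF : ContinuousOn F (closedBall 0 1)) (hlt : ∀ z, ‖z‖ ≤ 1 → z ≠ e → 1 < ‖F z - e‖)
    (hρ : 0 < ρ) :
    ∃ k > 0, ∃ δ > 0, ∀ᶠ s in 𝓝[>] 0, ∀ z y, ‖z‖ ≤ 1 → ‖y‖ ≤ 1 → ‖z - e‖ < δ → ρ ≤ ‖y - e‖ →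
      k * ‖z - y‖ ≤ ‖(F + bubble e s) z - (F + bubble e s) y‖ := by
  obtain ⟨μ, hμ, hμF⟩ := exists_forall_one_add_le hF hlt hρ
  obtain ⟨δ, hδ, hδF⟩ := Metric.continuousWithinAt_iff.mp
    (hF e (mem_closedBall_zero_iff.mpr he.le)) (μ / 3) (by positivity)
  refine ⟨μ / 6, by positivity, δ, hδ, ?_⟩
  filter_upwards [eventually_norm_bubble_le he hρ (η := μ / 3) (by positivity),
    self_mem_nhdsWithin] with s hs hs0 z y hz hy hδz hρy
  have hz_near : ‖(F + bubble e s) z - e‖ ≤ 1 + μ / 3 := by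
    refine norm_add_bubble_sub_le he hs0 hz ?_
    simpa only [hFe, dist_zero_right] using
      (hδF (mem_closedBall_zero_iff.mpr hz) (by rwa [dist_eq_norm])).le
  have hy_far : ‖F y - e‖ - μ / 3 ≤ ‖(F + bubble e s) y - e‖ :=
    norm_sub_le_norm_add_bubble_sub (hs y hy hρy)
  have triangle := norm_sub_norm_le ((F + bubble e s) y - e) ((F + bubble e s) z - e)
  rw [sub_sub_sub_cancel_right, norm_sub_rev _ ((F + bubble e s) z)] at triangle
  have diam : ‖z - y‖ ≤ 2 := by linarith [norm_sub_le z y]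
  calc μ / 6 * ‖z - y‖ ≤ μ / 6 * 2 := by gcongr
    _ ≤ ‖(F + bubble e s) z - (F + bubble e s) y‖ := by linarith [hμF y hy hρy]

lemma exists_eventually_expandsOn_add_bubble [ProperSpace E] {M : E →L[ℂ] E} {b c l : ℝ}
    (he : ‖e‖ = 1) (hFe : F e = 0) (hF : ContinuousOn F (closedBall 0 1))
    (hc : 0 < c) (hFc : ExpandsOn c F (closedBall 0 1))
    (hlt : ∀ z, ‖z‖ ≤ 1 → z ≠ e → 1 < ‖F z - e‖)
    (hM : HasStrictFDerivAt F M e) (hb : 0 < b) (hbM : ∀ v, ⟪e, M v⟫_ℂ = b * ⟪e, v⟫_ℂ)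
    (hl : 0 < l) (hlM : ∀ v, ⟪e, v⟫_ℂ = 0 → l * ‖v‖ ^ 2 ≤ (⟪v, M v⟫_ℂ).re) :
    ∃ k > 0, ∀ᶠ s in 𝓝[>] 0, ExpandsOn k (F + bubble e s) (closedBall 0 1) := by
  obtain ⟨k₁, hk₁, ρ, hρ, near⟩ := exists_expandsOn_near he hM hb hbM hl hlM
  obtain ⟨k₂, hk₂, δ, hδ, mixed⟩ := exists_eventually_separated he hFe hF hlt hρ
  refine ⟨min k₁ (min k₂ (c / 2)), by positivity, ?_⟩
  filter_upwards [mixed, eventually_expandsOn_far he hc hFc (lt_min hδ hρ), self_mem_nhdsWithin]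
    with s mixed far hs
  have cover : closedBall (0 : E) 1 ⊆
      closedBall 0 1 ∩ ball e ρ ∪ closedBall 0 1 \ ball e (min δ ρ) := fun z hz => by
    by_cases h : z ∈ ball e ρ
    · exact Or.inl ⟨hz, h⟩
    · exact Or.inr ⟨hz, fun h' => h (ball_subset_ball (min_le_right δ ρ) h')⟩
  refine (((near s hs).of_le (min_le_left _ _)).union
    (far.of_le ((min_le_right _ _).trans (min_le_right _ _))) fun z hz y hy => ?_).mono cover
  have hzδ : z ∈ ball e δ :=
    ball_subset_ball (min_le_left δ ρ) (by_contra fun h => hz.2 ⟨hz.1.1, h⟩)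
  have hyρ : y ∉ ball e ρ := fun h => hy.2 ⟨hy.1.1, h⟩
  rw [mem_ball, dist_eq_norm] at hzδ hyρ
  refine le_trans ?_ (mixed z y (mem_closedBall_zero_iff.mp hz.1.1)
    (mem_closedBall_zero_iff.mp hy.1.1) hzδ (not_lt.mp hyρ))
  gcongr
  exact (min_le_right _ _).trans (min_le_left _ _)

end AddBubble

section Engulf

open scoped InnerProductSpace

variable {E : Type*} [NormedAddCommGroup E] [InnerProductSpace ℂ E] {F : E → E} {e q : E}
  {c s₁ R : ℝ} {V : Set E}

lemma eventually_lt_norm_add_bubble_sub (he : ‖e‖ = 1) (hFe : F e = 0)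
    (hF : ContinuousWithinAt F (closedBall 0 1) e) (hle : ∀ z, ‖z‖ ≤ 1 → 1 ≤ ‖F z - e‖) :
    ∀ᶠ s in 𝓝[>] 0, ∀ z, ‖z‖ = 1 → 1 / 15 < ‖(F + bubble e s) z - e‖ := by
  have small : ∀ᶠ s : ℝ in 𝓝[>] 0, (3 / 4 * s) ^ 2 ≤ 1 / 10 := by
    have : ContinuousAt (fun s : ℝ => (3 / 4 * s) ^ 2) 0 := by fun_prop
    exact (this.eventually_le_const (by norm_num)).filter_mono nhdsWithin_le_nhds
  filter_upwards [eventually_norm_le_or_norm_bubble_le he hFe hF (η := 1 / 30) (by norm_num),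
    small, self_mem_nhdsWithin] with s hs hs' hs0 z hz
  rcases hs z hz.le with h | h
  · have := norm_sub_norm_le (bubble e s z - e) (-F z)
    rw [sub_neg_eq_add, norm_neg] at this
    rw [Pi.add_apply, add_comm (F z), add_sub_right_comm]
    linarith [one_div_le_norm_bubble_sub he hs0 hs' hz]
  · linarith [norm_sub_le_norm_add_bubble_sub (F := F) h, hle z hz.le]

lemma eventually_exists_add_bubble_mem_closedBall (he : ‖e‖ = 1) (hFe : F e = 0)
    (hF : ContinuousWithinAt F (closedBall 0 1) e) {η : ℝ} (hη : 0 < η) :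
    ∀ᶠ s in 𝓝[>] 0, ∃ z ∈ ball 0 1, (F + bubble e s) z ∈ closedBall e η := by
  obtain ⟨δ, hδ, hFδ⟩ := Metric.continuousWithinAt_iff.mp hF η hη
  have small : ∀ᶠ s : ℝ in 𝓝[>] 0, 7 / 16 * s ^ 2 < min δ 1 := by
    have : ContinuousAt (fun s : ℝ => 7 / 16 * s ^ 2) 0 := by fun_prop
    exact (this.eventually_lt_const (by simpa using hδ)).filter_mono nhdsWithin_le_nhds
  filter_upwards [small, self_mem_nhdsWithin] with s hs hs0
  have hs2 : 0 < s ^ 2 := pow_pos hs0 2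
  obtain ⟨hsδ, hs1⟩ := lt_min_iff.mp hs
  set z := ((1 - 7 / 16 * s ^ 2 : ℝ) : ℂ) • e with hz
  have hz1 : ‖z‖ < 1 := by
    rw [hz, norm_smul, he, mul_one, Complex.norm_of_nonneg (by linarith)]
    linarith
  have hze : dist z e < δ := by
    have : z - e = ((-(7 / 16 * s ^ 2) : ℝ) : ℂ) • e := by
      rw [hz]; push_cast; module
    rw [dist_eq_norm, this, norm_smul, he, mul_one, Complex.norm_real, norm_neg,
      Real.norm_of_nonneg (by positivity)]
    exact hsδ
  refine ⟨z, mem_ball_zero_iff.mpr hz1, ?_⟩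
  rw [mem_closedBall, dist_eq_norm, Pi.add_apply, bubble_center he hs0, add_sub_cancel_right]
  simpa only [hFe, dist_zero_right] using (hFδ (mem_closedBall_zero_iff.mpr hz1.le) hze).le

lemma eventually_closedBall_subset_image_add_bubble [ProperSpace E] (he : ‖e‖ = 1) (hFe : F e = 0)
    (hF : ContinuousOn F (closedBall 0 1)) (hle : ∀ z, ‖z‖ ≤ 1 → 1 ≤ ‖F z - e‖) :
    ∀ᶠ s in 𝓝[>] 0, IsOpen ((F + bubble e s) '' ball 0 1) →
      closedBall e (1 / 15) ⊆ (F + bubble e s) '' ball 0 1 := by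
  have hFe' := hF e (mem_closedBall_zero_iff.mpr he.le)
  filter_upwards [eventually_lt_norm_add_bubble_sub he hFe hFe' hle,
    eventually_exists_add_bubble_mem_closedBall he hFe hFe' (η := 1 / 15) (by norm_num),
    self_mem_nhdsWithin] with s avoid ⟨z, hz, hzq⟩ hs hopen
  refine subset_image_ball_of_disjoint_sphere (hF.add (contDiffOn_bubble he hs).continuousOn) hopen
    (convex_closedBall e _).isPreconnected ⟨_, hzq, z, hz, rfl⟩ fun z hz => ?_
  rw [mem_closedBall, dist_eq_norm, not_le]
  exact avoid z (mem_sphere_zero_iff_norm.mp hz)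

lemma eventually_add_bubble_notMem_image_closedBall [ProperSpace E] (he : ‖e‖ = 1) (hFe : F e = 0)
    (hF : ContinuousOn F (closedBall 0 1)) (hc : 0 < c) (hFc : ExpandsOn c F (closedBall 0 1))
    (hlt : ∀ z, ‖z‖ ≤ 1 → z ≠ e → 1 < ‖F z - e‖) (hs₁ : s₁ < 1) :
    ∀ᶠ s in 𝓝[>] 0, ∀ z, ‖z‖ = 1 → (F + bubble e s) z ∉ F '' closedBall 0 s₁ := by
  have hs₁' : 0 < 1 - s₁ := sub_pos.mpr hs₁
  have gap : ∀ y z : E, ‖y‖ ≤ s₁ → ‖z‖ = 1 → 1 - s₁ ≤ ‖y - z‖ := fun y z hy hz => by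
    rw [norm_sub_rev]; linarith [norm_sub_norm_le z y]
  obtain ⟨μ, hμ, hμF⟩ := exists_forall_one_add_le hF hlt hs₁'
  have hη : 0 < min (μ / 2) (c * (1 - s₁) / 2) := by positivity
  filter_upwards [eventually_norm_le_or_norm_bubble_le he hFe
    (hF e (mem_closedBall_zero_iff.mpr he.le)) hη, self_mem_nhdsWithin] with s hs hs0
  rintro z hz ⟨y, hy, hyz⟩
  rw [mem_closedBall_zero_iff] at hy
  rcases hs z hz.le with h | h
  · have := norm_add_bubble_sub_le he hs0 hz.le (h.trans (min_le_left _ _))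
    rw [← hyz] at this
    linarith [hμF y (hy.trans hs₁.le) (gap y e hy he)]
  · have := hFc y (mem_closedBall_zero_iff.mpr (hy.trans hs₁.le)) z
      (mem_closedBall_zero_iff.mpr hz.le)
    rw [hyz, Pi.add_apply, add_sub_cancel_left] at this
    have hgap : c * (1 - s₁) ≤ c * ‖y - z‖ := by gcongr; exact gap y z hy hz
    linarith [h.trans (min_le_right _ _), mul_pos hc hs₁']

lemma eventually_image_closedBall_subset_image_add_bubble [ProperSpace E] (he : ‖e‖ = 1)
    (hFe : F e = 0) (hF : ContinuousOn F (closedBall 0 1)) (hc : 0 < c)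
    (hFc : ExpandsOn c F (closedBall 0 1)) (hlt : ∀ z, ‖z‖ ≤ 1 → z ≠ e → 1 < ‖F z - e‖)
    (hs₀ : 0 < s₁) (hs₁ : s₁ < 1) (hopen : IsOpen (F '' ball 0 s₁)) :
    ∀ᶠ s in 𝓝[>] 0, IsOpen ((F + bubble e s) '' ball 0 1) →
      F '' closedBall 0 s₁ ⊆ (F + bubble e s) '' ball 0 1 := by
  obtain ⟨η, hη, hηF⟩ := Metric.nhds_basis_closedBall.mem_iff.mp
    (hopen.mem_nhds ⟨0, mem_ball_self hs₀, rfl⟩)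
  filter_upwards [eventually_add_bubble_notMem_image_closedBall he hFe hF hc hFc hlt hs₁,
    eventually_norm_bubble_le he one_pos hη, self_mem_nhdsWithin] with s avoid small hs hopen
  refine subset_image_ball_of_disjoint_sphere (hF.add (contDiffOn_bubble he hs).continuousOn) hopen
    ((convex_closedBall 0 _).isPreconnected.image _ (hF.mono (closedBall_subset_closedBall hs₁.le)))
    ⟨_, ?_, 0, mem_ball_self one_pos, rfl⟩ fun z hz => avoid z (mem_sphere_zero_iff_norm.mp hz)
  refine Set.image_mono ball_subset_closedBall (hηF ?_)
  rw [mem_closedBall, dist_eq_norm, Pi.add_apply, add_sub_cancel_left]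
  exact small 0 (by simp) (by rw [zero_sub, norm_neg, he])

lemma IsBallEmbedding.exists_engulf_of_apply_eq_zero [FiniteDimensional ℂ E]
    (hFV : IsBallEmbedding R V F) (hR : 1 < R) (hV : IsOpen V) (he : ‖e‖ = 1) (hFe : F e = 0)
    (hlt : ∀ z, ‖z‖ ≤ 1 → z ≠ e → 1 < ‖F z - e‖) {l : ℝ} (hl : 0 < l)
    (hlM : ∀ v, ⟪e, v⟫_ℂ = 0 → l * ‖v‖ ^ 2 ≤ (⟪v, fderiv ℂ F e v⟫_ℂ).re)
    (hball : closedBall e 1 ⊆ V) (hs₀ : 0 < s₁) (hs₁ : s₁ < 1) :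
    ∃ G, IsBallEmbedding 1 V G ∧ F '' closedBall 0 s₁ ⊆ G '' ball 0 1 ∧
      closedBall e (1 / 15) ⊆ G '' ball 0 1 := by
  have := FiniteDimensional.proper ℂ E
  have hsub : closedBall (0 : E) 1 ⊆ ball 0 R := closedBall_subset_ball hR
  have heR : e ∈ ball 0 R := hsub (mem_closedBall_zero_iff.mpr he.le)
  have hF : ContinuousOn F (closedBall 0 1) := hFV.contDiffOn.continuousOn.mono hsub
  have hM := hFV.hasStrictFDerivAt heR
  obtain ⟨c, hc, hFc⟩ := hFV.exists_expandsOn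
  replace hFc := hFc.mono hsub
  have hle : ∀ z, ‖z‖ ≤ 1 → 1 ≤ ‖F z - e‖ := fun z hz => by
    rcases eq_or_ne z e with rfl | h
    · rw [hFe, zero_sub, norm_neg, he]
    · exact (hlt z hz h).le
  obtain ⟨-, b, hb, hbM⟩ := exists_inner_fderiv_eq_mul_inner (q := e) he.le hM.hasFDerivAt
    (LinearMap.injective_iff_surjective.mp (hFV.injective_fderiv heR))
    (by rw [hFe]; rintro rfl; simp at he)
    fun z hz => by rw [hFe, zero_sub, norm_neg, he]; exact hle z hz
  rw [hFe, sub_zero] at hbM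
  obtain ⟨k, hk, hexp⟩ :=
    exists_eventually_expandsOn_add_bubble he hFe hF hc hFc hlt hM hb hbM hl hlM
  obtain ⟨s, hs, hGk, hGV, hGF, hGe⟩ := (eventually_mem_nhdsWithin.and <| hexp.and <|
    (eventually_mapsTo_add_bubble hV he hFe hF (hFV.mapsTo.mono_left hsub) hball).and <|
    (eventually_image_closedBall_subset_image_add_bubble he hFe hF hc hFc hlt hs₀ hs₁
      (hFV.of_le (hs₁.trans hR).le).isOpen_image).and <|
    eventually_closedBall_subset_image_add_bubble he hFe hF hle).exists
  have hG : IsBallEmbedding 1 V (F + bubble e s) :=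
    ⟨((hFV.contDiffOn.mono hsub).add (contDiffOn_bubble he hs)).mono ball_subset_closedBall,
      ⟨k, hk, hGk.mono ball_subset_closedBall⟩, hGV.mono_left ball_subset_closedBall⟩
  exact ⟨_, hG, hGF hG.isOpen_image, hGe hG.isOpen_image⟩

end Engulf

section Rescale

variable {E : Type*} [NormedAddCommGroup E] [NormedSpace ℂ E] {R a : ℝ} {V W Y : Set E}
  {F Φ : E → E}

lemma IsBallEmbedding.comp (hF : IsBallEmbedding R V F) (hΦ : ContDiff ℂ 1 Φ) (ha : 0 < a)
    (hΦa : ExpandsOn a Φ Set.univ) (hmaps : Set.MapsTo Φ V W) : IsBallEmbedding R W (Φ ∘ F) := by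
  obtain ⟨c, hc, hFc⟩ := hF.exists_expandsOn
  exact ⟨hΦ.comp_contDiffOn hF.contDiffOn,
    ⟨a * c, by positivity, hΦa.comp hFc (Set.mapsTo_univ _ _) ha.le⟩, hmaps.comp hF.mapsTo⟩

lemma smul_mem_ball_zero_iff (ha : 0 < a) {z : E} :
    (a : ℂ) • z ∈ ball 0 R ↔ z ∈ ball 0 (R / a) := by
  rw [mem_ball_zero_iff, mem_ball_zero_iff, norm_smul, Complex.norm_of_nonneg ha.le,
    lt_div_iff₀' ha]

lemma IsBallEmbedding.comp_smul (hF : IsBallEmbedding R V F) (ha : 0 < a) :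
    IsBallEmbedding (R / a) V fun z => F ((a : ℂ) • z) := by
  have hmaps : Set.MapsTo (fun z : E => (a : ℂ) • z) (ball 0 (R / a)) (ball 0 R) :=
    fun z hz => (smul_mem_ball_zero_iff ha).mpr hz
  obtain ⟨c, hc, hFc⟩ := hF.exists_expandsOn
  refine ⟨hF.contDiffOn.comp (by fun_prop) hmaps, ⟨c * a, by positivity, ?_⟩,
    hF.mapsTo.comp hmaps⟩
  refine hFc.comp (fun x _ y _ => ?_) hmaps hc.le
  rw [← smul_sub, norm_smul, Complex.norm_of_nonneg ha.le]

lemma image_comp_smul_ball (ha : 0 < a) :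
    (fun z => F ((a : ℂ) • z)) '' ball 0 (R / a) = F '' ball 0 R := by
  have : ball (0 : E) (R / a) = (fun z => (a : ℂ) • z) ⁻¹' ball 0 R :=
    Set.ext fun z => (smul_mem_ball_zero_iff ha).symm
  rw [← Function.comp_def F, Set.image_comp, this, Set.image_preimage_eq]
  exact fun z => ⟨(a : ℂ)⁻¹ • z, smul_inv_smul₀ (Complex.ofReal_ne_zero.mpr ha.ne') z⟩

lemma IsBallEmbedding.exists_subset_image_ball [FiniteDimensional ℂ E]
    (hF : IsBallEmbedding R V F) (hR : 0 < R) (hY : IsCompact Y) (hYF : Y ⊆ F '' ball 0 R) :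
    ∃ s, 0 < s ∧ s < R ∧ Y ⊆ F '' ball 0 s := by
  have hcover : Y ⊆ ⋃ s : Set.Ioo 0 R, F '' ball 0 s := fun y hy => by
    obtain ⟨z, hz, rfl⟩ := hYF hy
    obtain ⟨s, hs, hsR⟩ := exists_between (mem_ball_zero_iff.mp hz)
    exact Set.mem_iUnion.mpr
      ⟨⟨s, (norm_nonneg z).trans_lt hs, hsR⟩, z, mem_ball_zero_iff.mpr hs, rfl⟩
  have : Nonempty (Set.Ioo 0 R) := (Set.nonempty_Ioo.mpr hR).to_subtype
  have hmono : Monotone fun s : Set.Ioo 0 R => F '' ball 0 s :=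
    fun s t hst => Set.image_mono (ball_subset_ball hst)
  obtain ⟨s, hs⟩ := hY.elim_directed_cover _ (fun s => (hF.of_le s.2.2.le).isOpen_image) hcover
    hmono.directed_le
  exact ⟨s, s.2.1, s.2.2, hs⟩

lemma exists_isBallEmbedding (hV : IsOpen V) (hne : V.Nonempty) :
    ∃ F, IsBallEmbedding 1 V F := by
  obtain ⟨x, hx⟩ := hne
  obtain ⟨η, hη, hηV⟩ := Metric.isOpen_iff.mp hV x hx
  have hid : IsBallEmbedding η (ball 0 η) (id : E → E) :=
    ⟨contDiffOn_id, ⟨1, one_pos, fun _ _ _ _ => (one_mul _).le⟩, Set.mapsTo_id _⟩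
  have := (hid.comp (W := V) (Φ := (· + x)) (by fun_prop) one_pos
    (fun _ _ _ _ => by simp) fun z hz => hηV (by simpa using hz)).comp_smul hη
  rw [div_self hη.ne'] at this
  exact ⟨_, this⟩

/-- `Y` is contained in the image of an open ball embedded holomorphically in `V`. -/
def Engulfable (V Y : Set E) : Prop :=
  ∃ F, IsBallEmbedding 1 V F ∧ Y ⊆ F '' ball 0 1

lemma Engulfable.mono {Z : Set E} (h : Engulfable V Y) (hVW : V ⊆ W) (hZY : Z ⊆ Y) :
    Engulfable W Z := by
  obtain ⟨F, hF, hYF⟩ := h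
  exact ⟨F, hF.mono hVW, hZY.trans hYF⟩

lemma Engulfable.subset (h : Engulfable V Y) : Y ⊆ V := by
  obtain ⟨F, hF, hYF⟩ := h
  exact hYF.trans hF.mapsTo.image_subset

lemma IsBallEmbedding.engulfable_image_closedBall [FiniteDimensional ℂ E]
    (hF : IsBallEmbedding R V F) {s : ℝ} (hs : 0 ≤ s) (hsR : s < R) (hW : IsOpen W)
    (hFW : F '' closedBall 0 s ⊆ W) :
    Engulfable W (F '' closedBall 0 s) := by
  have := FiniteDimensional.proper ℂ E
  have hopen : IsOpen (ball 0 R ∩ F ⁻¹' W) :=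
    hF.contDiffOn.continuousOn.isOpen_inter_preimage isOpen_ball hW
  obtain ⟨δ, hδ, hδW⟩ := (isCompact_closedBall (0 : E) s).exists_thickening_subset_open hopen
    (Set.subset_inter (closedBall_subset_ball hsR) (Set.image_subset_iff.mp hFW))
  rw [thickening_closedBall hδ hs] at hδW
  obtain ⟨hδR, hδFW⟩ := Set.subset_inter_iff.mp hδW
  obtain ⟨c, hc, hFc⟩ := hF.exists_expandsOn
  have hF' : IsBallEmbedding (δ + s) W F :=
    ⟨hF.contDiffOn.mono hδR, ⟨c, hc, hFc.mono hδR⟩, hδFW⟩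
  have hδs : 0 < δ + s := by positivity
  refine ⟨fun z => F (((δ + s : ℝ) : ℂ) • z), ?_, ?_⟩
  · simpa only [div_self hδs.ne'] using hF'.comp_smul hδs
  · rw [← div_self hδs.ne', image_comp_smul_ball hδs]
    exact Set.image_mono (closedBall_subset_ball (by linarith))

end Rescale

section Similarity

variable {E : Type*} [NormedAddCommGroup E] [NormedSpace ℂ E] {r : ℝ}

/-- The similarity `w ↦ r • W w + c`, used to move nearest-point configurations into standard
position. -/
noncomputable def similarity (W : E ≃ₗᵢ[ℂ] E) (hr : 0 < r) (c : E) : E ≃ E where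
  toFun w := (r : ℂ) • W w + c
  invFun y := (r : ℂ)⁻¹ • W.symm (y - c)
  left_inv w := by
    simp only [add_sub_cancel_right, map_smul, W.symm_apply_apply,
      inv_smul_smul₀ (Complex.ofReal_ne_zero.mpr hr.ne')]
  right_inv y := by
    simp only [map_smul, W.apply_symm_apply, smul_inv_smul₀ (Complex.ofReal_ne_zero.mpr hr.ne'),
      sub_add_cancel]

variable (W : E ≃ₗᵢ[ℂ] E) (hr : 0 < r) (c : E)

lemma contDiff_similarity : ContDiff ℂ 1 (similarity W hr c) :=
  (W.contDiff.const_smul _).add contDiff_const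

lemma contDiff_similarity_symm : ContDiff ℂ 1 (similarity W hr c).symm :=
  (W.symm.contDiff.comp (contDiff_id.sub contDiff_const)).const_smul _

lemma norm_similarity_sub (w w' : E) :
    ‖similarity W hr c w - similarity W hr c w'‖ = r * ‖w - w'‖ := by
  change ‖(r : ℂ) • W w + c - ((r : ℂ) • W w' + c)‖ = _
  rw [add_sub_add_right_eq_sub, ← smul_sub, ← map_sub, norm_smul, W.norm_map,
    Complex.norm_of_nonneg hr.le]

lemma norm_similarity_symm_sub (y y' : E) :
    ‖(similarity W hr c).symm y - (similarity W hr c).symm y'‖ = r⁻¹ * ‖y - y'‖ := by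
  rw [eq_inv_mul_iff_mul_eq₀ hr.ne', ← norm_similarity_sub W hr c, Equiv.apply_symm_apply,
    Equiv.apply_symm_apply]

lemma fderiv_similarity_symm_comp {F : E → E} {e : E} (hF : DifferentiableAt ℂ F e) (v : E) :
    fderiv ℂ ((similarity W hr c).symm ∘ F) e v = (r : ℂ)⁻¹ • W.symm (fderiv ℂ F e v) :=
  DFunLike.congr_fun ((W.symm.toContinuousLinearEquiv.toContinuousLinearMap.hasFDerivAt.comp e
    (hF.hasFDerivAt.sub_const c)).const_smul (r : ℂ)⁻¹).fderiv v

end Similarity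

lemma norm_sub_lineMap_lt {E : Type*} [NormedAddCommGroup E] [NormedSpace ℝ E]
    [StrictConvexSpace ℝ E] {p q w : E} {t : ℝ} (ht₀ : 0 < t) (ht₁ : t < 1) (hw : w ≠ p)
    (hle : ‖p - q‖ ≤ ‖w - q‖) :
    ‖p - AffineMap.lineMap p q t‖ < ‖w - AffineMap.lineMap p q t‖ := by
  set q' := AffineMap.lineMap p q t with hq'
  simp only [← dist_eq_norm] at hle ⊢
  by_contra! h
  have hpq' : dist p q' = t * dist p q := by rw [hq', dist_left_lineMap, Real.norm_of_nonneg ht₀.le]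
  have hq'q : dist q' q = (1 - t) * dist p q := by
    rw [hq', dist_lineMap_right, Real.norm_of_nonneg (by linarith)]
  have triangle := dist_triangle w q' q
  have hwq : dist w q = dist p q := by linarith
  have hlineMap : q' = AffineMap.lineMap w q t := by
    refine eq_lineMap_of_dist_eq_mul_of_dist_eq_mul ?_ (by rw [hq'q, hwq])
    rw [hwq]
    linarith
  rw [hq', AffineMap.lineMap_apply_module, AffineMap.lineMap_apply_module,
    add_left_inj] at hlineMap
  exact hw (smul_right_injective E (sub_pos.mpr ht₁).ne' hlineMap).symm

section NearestPoint

open scoped InnerProductSpace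

variable {E : Type*} [NormedAddCommGroup E] [InnerProductSpace ℂ E] [FiniteDimensional ℂ E]
  {F : E → E} {e p q w : E} {s₁ R d : ℝ} {V V₀ Y : Set E}

lemma IsBallEmbedding.exists_linearIsometryEquiv_of_nearest (hF : IsBallEmbedding R V F)
    (heR : e ∈ ball 0 R) (he : ‖e‖ ≤ 1) (hq : q ≠ F e)
    (hmin : ∀ z, ‖z‖ ≤ 1 → ‖F e - q‖ ≤ ‖F z - q‖) :
    ‖e‖ = 1 ∧ ∃ W : E ≃ₗᵢ[ℂ] E, (‖F e - q‖ : ℂ) • W e = q - F e ∧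
      ∃ l > 0, ∀ v, ⟪e, v⟫_ℂ = 0 → l * ‖v‖ ^ 2 ≤ (⟪W v, fderiv ℂ F e v⟫_ℂ).re := by
  have := FiniteDimensional.complete ℂ E
  have hinj := hF.injective_fderiv heR
  obtain ⟨he1, b, -, hb⟩ := exists_inner_fderiv_eq_mul_inner he
    (hF.hasStrictFDerivAt heR).hasFDerivAt (LinearMap.injective_iff_surjective.mp hinj) hq hmin
  have hr : 0 < ‖F e - q‖ := norm_pos_iff.mpr (sub_ne_zero.mpr hq.symm)
  obtain ⟨W, hW, hl⟩ := exists_linearIsometryEquiv_le_re_inner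
    (n := (‖F e - q‖ : ℂ)⁻¹ • (q - F e)) (b := ‖F e - q‖⁻¹ * b) he1
    (by rw [norm_smul, norm_inv, Complex.norm_of_nonneg hr.le, norm_sub_rev,
      inv_mul_cancel₀ (norm_sub_rev q (F e) ▸ hr.ne')])
    hinj fun v => by
      rw [inner_smul_left, hb, map_inv₀, Complex.conj_ofReal]
      push_cast
      ring
  exact ⟨he1, W, by rw [hW, smul_inv_smul₀ (Complex.ofReal_ne_zero.mpr hr.ne')], hl⟩

lemma IsBallEmbedding.exists_engulf_of_unique_nearest (hF : IsBallEmbedding R V F) (hR : 1 < R)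
    (hV : IsOpen V) (he : ‖e‖ ≤ 1) (hq : q ≠ F e)
    (hlt : ∀ z, ‖z‖ ≤ 1 → z ≠ e → ‖F e - q‖ < ‖F z - q‖) (hball : closedBall q ‖F e - q‖ ⊆ V)
    (hs₀ : 0 < s₁) (hs₁ : s₁ < 1) :
    ∃ G, IsBallEmbedding 1 V G ∧ F '' closedBall 0 s₁ ⊆ G '' ball 0 1 ∧
      closedBall q (‖F e - q‖ / 15) ⊆ G '' ball 0 1 := by
  have heR : e ∈ ball 0 R := mem_ball_zero_iff.mpr (he.trans_lt hR)
  obtain ⟨he1, W, hW, l, hl, hlW⟩ := hF.exists_linearIsometryEquiv_of_nearest heR he hq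
    fun z hz => by rcases eq_or_ne z e with rfl | h; exacts [le_rfl, (hlt z hz h).le]
  set r := ‖F e - q‖
  have hr0 : 0 < r := norm_pos_iff.mpr (sub_ne_zero.mpr hq.symm)
  set Φ := similarity W hr0 (F e)
  have hΦe : Φ e = q := by change (r : ℂ) • W e + F e = q; rw [hW, sub_add_cancel]
  have norm_Φ (w : E) : ‖Φ w - q‖ = r * ‖w - e‖ := by rw [← hΦe, norm_similarity_sub]
  have hΦV : ContDiff ℂ 1 Φ := contDiff_similarity W hr0 (F e)
  have hΨF : IsBallEmbedding R (Φ ⁻¹' V) (Φ.symm ∘ F) :=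
    hF.comp (contDiff_similarity_symm W hr0 (F e)) (inv_pos.mpr hr0)
      (fun y _ y' _ => (norm_similarity_symm_sub W hr0 (F e) y y').ge)
      fun y hy => by rwa [Set.mem_preimage, Φ.apply_symm_apply]
  have hballΦ : closedBall e 1 ⊆ Φ ⁻¹' V := fun w hw => hball <| by
    rw [mem_closedBall, dist_eq_norm] at hw ⊢
    rw [norm_Φ]
    exact mul_le_of_le_one_right hr0.le hw
  obtain ⟨G, hG, hGF, hGe⟩ := hΨF.exists_engulf_of_apply_eq_zero hR (hV.preimage hΦV.continuous)
    he1 (by change (r : ℂ)⁻¹ • W.symm (F e - F e) = 0; rw [sub_self, map_zero, smul_zero])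
    (fun z hz hze => by
      have := hlt z hz hze
      rw [← Φ.apply_symm_apply (F z), norm_Φ] at this
      exact (lt_mul_iff_one_lt_right hr0).mp this)
    (l := r⁻¹ * l) (by positivity) (fun v hv => by
      rw [fderiv_similarity_symm_comp _ _ _ (hF.hasStrictFDerivAt heR).differentiableAt,
        inner_smul_right, ← W.inner_map_eq_flip, ← Complex.ofReal_inv, Complex.re_ofReal_mul,
        mul_assoc]
      exact mul_le_mul_of_nonneg_left (hlW v hv) (inv_nonneg.mpr hr0.le))
    hballΦ hs₀ hs₁
  refine ⟨Φ ∘ G, hG.comp hΦV hr0 (fun w _ w' _ => (norm_similarity_sub W hr0 (F e) w w').ge)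
    (Set.mapsTo_preimage _ _), ?_, fun y hy => ?_⟩
  · rwa [Set.image_comp, ← Φ.symm_image_subset, ← Set.image_comp]
  · rw [Set.image_comp]
    refine Set.mem_image_equiv.mpr (hGe ?_)
    rw [mem_closedBall, dist_eq_norm] at hy ⊢
    rw [← Φ.apply_symm_apply y, norm_Φ] at hy
    rw [le_div_iff₀ (by norm_num)] at hy ⊢
    nlinarith

lemma IsBallEmbedding.exists_engulf (hF : IsBallEmbedding R V F) (hR : 1 < R)
    (hV : IsOpen V) (he : ‖e‖ ≤ 1) (hq : q ≠ F e)
    (hle : ∀ z, ‖z‖ ≤ 1 → ‖F e - q‖ ≤ ‖F z - q‖) (hball : closedBall q ‖F e - q‖ ⊆ V)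
    (hs₀ : 0 < s₁) (hs₁ : s₁ < 1) :
    ∃ G, IsBallEmbedding 1 V G ∧ F '' closedBall 0 s₁ ⊆ G '' ball 0 1 ∧
      closedBall q (‖F e - q‖ / 16) ⊆ G '' ball 0 1 := by
  have : StrictConvexSpace ℝ E :=
    let _ := InnerProductSpace.complexToReal (G := E)
    inferInstance
  obtain ⟨c, hc, hFc⟩ := hF.exists_expandsOn
  have hsub : closedBall (0 : E) 1 ⊆ ball 0 R := closedBall_subset_ball hR
  have hinj := (hFc.mono hsub).injOn hc
  -- Moving `q` slightly towards `F e` makes the nearest point unique.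
  set q' := AffineMap.lineMap (F e) q (999 / 1000 : ℝ) with hq'
  have hr : ‖F e - q'‖ = 999 / 1000 * ‖F e - q‖ := by
    rw [← dist_eq_norm, hq', dist_left_lineMap, dist_eq_norm]; norm_num
  have hqq' : dist q q' = 1 / 1000 * ‖F e - q‖ := by
    rw [hq', dist_right_lineMap, dist_eq_norm]; norm_num
  have hq0 : 0 < ‖F e - q‖ := norm_pos_iff.mpr (sub_ne_zero.mpr hq.symm)
  obtain ⟨G, hG, hGF, hGq⟩ := hF.exists_engulf_of_unique_nearest (q := q') hR hV he
    (by rintro h; rw [h, sub_self, norm_zero] at hr; linarith)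
    (fun z hz hze => norm_sub_lineMap_lt (by norm_num) (by norm_num)
      (fun h => hze (hinj (mem_closedBall_zero_iff.mpr hz) (mem_closedBall_zero_iff.mpr he) h))
      (hle z hz))
    ((closedBall_subset_closedBall' (by rw [dist_comm]; linarith)).trans hball) hs₀ hs₁
  exact ⟨G, hG, hGF, (closedBall_subset_closedBall' (by linarith)).trans hGq⟩

lemma Engulfable.union_closedBall (hY : Engulfable V₀ Y) (hYc : IsCompact Y) (hV₀ : V₀ ⊆ V)
    (hV : IsOpen V) (hw : w ∈ Y) (hball : closedBall q ‖w - q‖ ⊆ V)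
    (hfar : ∀ v ∈ V₀, d ≤ ‖v - q‖) : Engulfable V (Y ∪ closedBall q (d / 16)) := by
  have := FiniteDimensional.proper ℂ E
  obtain ⟨F, hF, hYF⟩ := hY
  obtain ⟨s, hs₀, hs₁, hYs⟩ := hF.exists_subset_image_ball one_pos hYc hYF
  obtain ⟨t, hst, ht₁⟩ := exists_between hs₁
  have ht₀ : 0 < t := hs₀.trans hst
  set H : E → E := fun z => F ((t : ℂ) • z)
  have hHV : IsBallEmbedding (1 / t) V₀ H := hF.comp_smul ht₀
  have hR : 1 < 1 / t := (one_lt_div ht₀).mpr ht₁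
  have hYH : Y ⊆ H '' ball 0 (s / t) := by rwa [image_comp_smul_ball ht₀]
  have hst1 : s / t < 1 := (div_lt_one ht₀).mpr hst
  have hsub : closedBall (0 : E) 1 ⊆ ball 0 (1 / t) := closedBall_subset_ball hR
  obtain ⟨e, he, hmin⟩ := (isCompact_closedBall (0 : E) 1).exists_isMinOn
    (nonempty_closedBall.mpr zero_le_one)
    ((hHV.contDiffOn.continuousOn.mono hsub).sub continuousOn_const).norm (f := fun z => ‖H z - q‖)
  have hde : d ≤ ‖H e - q‖ := hfar _ (hHV.mapsTo (hsub he))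
  rcases eq_or_ne q (H e) with hq | hq
  · rw [← hq, sub_self, norm_zero] at hde
    have hqF : q ∈ F '' ball 0 1 := by
      rw [← image_comp_smul_ball ht₀, hq]
      exact Set.mem_image_of_mem H (hsub he)
    exact ⟨F, hF.mono hV₀, Set.union_subset hYF fun y hy => by
      rwa [dist_le_zero.mp ((mem_closedBall.mp hy).trans (by linarith))]⟩
  have hle : ‖H e - q‖ ≤ ‖w - q‖ := by
    obtain ⟨z, hz, rfl⟩ := hYH hw
    exact hmin (ball_subset_closedBall (ball_subset_ball hst1.le hz))
  obtain ⟨G, hG, hGH, hGq⟩ := (hHV.mono hV₀).exists_engulf hR hV (mem_closedBall_zero_iff.mp he)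
    hq (fun z hz => hmin (mem_closedBall_zero_iff.mpr hz))
    ((closedBall_subset_closedBall hle).trans hball) (div_pos hs₀ ht₀) hst1
  exact ⟨G, hG, Set.union_subset ((hYH.trans (Set.image_mono ball_subset_closedBall)).trans hGH)
    ((closedBall_subset_closedBall (by linarith)).trans hGq)⟩

end NearestPoint

section Packing

variable {E : Type*} [PseudoMetricSpace E] {S : Finset E} {r : E → ℝ} {U O : Set E} {x : E}

/-- The closed balls `closedBall x (r x)` for `x ∈ S` are nondegenerate, pairwise disjoint and
contained in `O`. -/
structure IsBallPacking (S : Finset E) (r : E → ℝ) (O : Set E) : Prop where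
  pos : ∀ x ∈ S, 0 < r x
  closedBall_subset : ∀ x ∈ S, closedBall x (r x) ⊆ O
  pairwiseDisjoint : (S : Set E).PairwiseDisjoint fun x => closedBall x (r x)

/-- The set `U` with the half-size balls of the packing `(S, r)` removed. -/
def removeHalfBalls (U : Set E) (S : Finset E) (r : E → ℝ) : Set E :=
  U \ ⋃ x ∈ S, closedBall x (r x / 2)

lemma isOpen_removeHalfBalls (hU : IsOpen U) : IsOpen (removeHalfBalls U S r) :=
  hU.sdiff (S.finite_toSet.isClosed_biUnion fun _ _ => isClosed_closedBall)

lemma removeHalfBalls_subset : removeHalfBalls U S r ⊆ U := Set.sdiff_subset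

lemma half_lt_dist_of_mem_removeHalfBalls {v : E} (hx : x ∈ S) (hv : v ∈ removeHalfBalls U S r) :
    r x / 2 < dist v x :=
  not_le.mp fun h => hv.2 (Set.mem_biUnion hx h)

namespace IsBallPacking

lemma mono (h : IsBallPacking S r O) (hOU : O ⊆ U) : IsBallPacking S r U :=
  ⟨h.pos, fun x hx => (h.closedBall_subset x hx).trans hOU, h.pairwiseDisjoint⟩

lemma subset {T : Finset E} (h : IsBallPacking S r O) (hTS : T ⊆ S) : IsBallPacking T r O :=
  ⟨fun x hx => h.pos x (hTS hx), fun x hx => h.closedBall_subset x (hTS hx),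
    h.pairwiseDisjoint.subset hTS⟩

lemma closedBall_div_subset (h : IsBallPacking S r O) {k : ℝ} (hk : 1 ≤ k) (hx : x ∈ S) :
    closedBall x (r x / k) ⊆ closedBall x (r x) :=
  closedBall_subset_closedBall (div_le_self (h.pos x hx).le hk)

lemma iUnion_closedBall_div_subset (h : IsBallPacking S r O) {k : ℝ} (hk : 1 ≤ k) :
    ⋃ x ∈ S, closedBall x (r x / k) ⊆ O :=
  Set.iUnion₂_subset fun x hx =>
    (h.closedBall_div_subset hk hx).trans (h.closedBall_subset x hx)

lemma pairwiseDisjoint_div (h : IsBallPacking S r O) {k : ℝ} (hk : 1 ≤ k) :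
    (S : Set E).PairwiseDisjoint fun x => closedBall x (r x / k) :=
  fun _ hx _ hy hxy => (h.pairwiseDisjoint hx hy hxy).mono (h.closedBall_div_subset hk hx)
    (h.closedBall_div_subset hk hy)

lemma ball_subset_removeHalfBalls_erase [DecidableEq E] (h : IsBallPacking S r U) (hx : x ∈ S) :
    ball x (r x) ⊆ removeHalfBalls U (S.erase x) r := by
  refine fun y hy => ⟨h.closedBall_subset x hx (ball_subset_closedBall hy), fun hy' => ?_⟩
  obtain ⟨z, hz, hyz⟩ := Set.mem_iUnion₂.mp hy'
  obtain ⟨hzx, hzS⟩ := Finset.mem_erase.mp hz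
  exact Set.disjoint_left.mp (h.pairwiseDisjoint hx hzS hzx.symm) (ball_subset_closedBall hy)
    (h.closedBall_div_subset one_le_two hzS hyz)

end IsBallPacking

lemma removeHalfBalls_anti {T : Finset E} (hTS : T ⊆ S) :
    removeHalfBalls U S r ⊆ removeHalfBalls U T r :=
  Set.sdiff_subset_sdiff_right (Set.biUnion_subset_biUnion_left hTS)

end Packing

section Reach

variable {E : Type*} [NormedAddCommGroup E] [InnerProductSpace ℂ E] [FiniteDimensional ℂ E]
  {U V N Y : Set E} {p b b' : E} {ε : ℝ}

lemma Engulfable.union_singleton_of_mem_ball (hb : Engulfable V (Y ∪ {b})) (hV : IsOpen V)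
    (hY : IsCompact Y) (hbp : b ∈ ball p (ε / 4)) (hb'p : b' ∈ ball p (ε / 4))
    (hεV : ball p ε ⊆ V) : Engulfable V (Y ∪ {b'}) := by
  rw [mem_ball] at hbp hb'p
  have hball : closedBall b' ‖b - b'‖ ⊆ V := by
    refine (closedBall_subset_ball' ?_).trans hεV
    rw [← dist_eq_norm]
    linarith [dist_triangle_right b b' p, dist_nonneg (x := b) (y := p)]
  have := hb.union_closedBall (d := 0) (hY.union isCompact_singleton) subset_rfl hV
    (Or.inr rfl) hball fun v _ => norm_nonneg _
  rw [zero_div, closedBall_zero] at this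
  exact this.mono subset_rfl (Set.union_subset_union_left _ Set.subset_union_left)

/-- The points that can be engulfed together with `Y` form a relatively clopen subset of `V`. -/
lemma Engulfable.exists_mem_union_singleton (h : Engulfable V Y) (hV : IsOpen V)
    (hY : IsCompact Y) (hYne : Y.Nonempty) (hU : IsPreconnected U) (hVU : V ⊆ U)
    (hUV : ¬ U ⊆ V) (hN : IsOpen N) (hUVN : U ⊆ V ∪ N) :
    ∃ b ∈ N, Engulfable V (Y ∪ {b}) := by
  by_contra! hdisj
  set B := {b | Engulfable V (Y ∪ {b})}
  have hBV : B ⊆ V := fun b hb => hb.subset (Or.inr rfl)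
  have hlocal : ∀ p ∈ V, ∃ W ∈ 𝓝 p, ∀ b ∈ W ∩ B, W ⊆ B := fun p hp => by
    obtain ⟨ε, hε, hεV⟩ := Metric.isOpen_iff.mp hV p hp
    exact ⟨ball p (ε / 4), ball_mem_nhds p (by positivity), fun b hb b' hb' =>
      hb.2.union_singleton_of_mem_ball hV hY hb.1 hb' hεV⟩
  have hBopen : IsOpen B := isOpen_iff_mem_nhds.mpr fun b hb => by
    obtain ⟨W, hW, hWB⟩ := hlocal b (hBV hb)
    exact mem_of_superset hW (hWB b ⟨mem_of_mem_nhds hW, hb⟩)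
  have hBclosed : closure B ∩ U ⊆ B := fun p ⟨hpB, hpU⟩ => by
    rcases hUVN hpU with hpV | hpN
    · obtain ⟨W, hW, hWB⟩ := hlocal p hpV
      obtain ⟨b, hb⟩ := mem_closure_iff_nhds.mp hpB W hW
      exact hWB b hb (mem_of_mem_nhds hW)
    · obtain ⟨b, hbN, hbB⟩ := mem_closure_iff.mp hpB N hN hpN
      exact absurd hbB (hdisj b hbN)
  obtain ⟨y, hy⟩ := hYne
  have hyB : y ∈ B :=
    h.mono subset_rfl (Set.union_subset subset_rfl (Set.singleton_subset_iff.mpr hy))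
  exact hUV ((hU.subset_of_closure_inter_subset hBopen ⟨y, hVU (hBV hyB), hyB⟩ hBclosed).trans hBV)

lemma Engulfable.exists_reach {S : Finset E} {r : E → ℝ}
    (h : Engulfable (removeHalfBalls U S r) Y) (hS : S.Nonempty) (hU : IsOpen U)
    (hUc : IsPreconnected U) (hY : IsCompact Y) (hYne : Y.Nonempty) (hSr : IsBallPacking S r U) :
    ∃ x ∈ S, ∃ b ∈ ball x (r x), Engulfable (removeHalfBalls U S r) (Y ∪ {b}) := by
  obtain ⟨x₀, hx₀⟩ := hS
  have hr := hSr.pos x₀ hx₀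
  have hproper : ¬ U ⊆ removeHalfBalls U S r := fun hsub => by
    have := half_lt_dist_of_mem_removeHalfBalls hx₀
      (hsub (hSr.closedBall_subset x₀ hx₀ (mem_closedBall_self hr.le)))
    rw [dist_self] at this
    linarith
  have hcover : U ⊆ removeHalfBalls U S r ∪ ⋃ x ∈ S, ball x (r x) := fun y hy =>
    or_iff_not_imp_right.mpr fun hyN => ⟨hy, fun hy' => hyN <| Set.iUnion₂_mono
      (fun x hx => closedBall_subset_ball (half_lt_self (hSr.pos x hx))) hy'⟩
  obtain ⟨b, hbN, hb⟩ := h.exists_mem_union_singleton (isOpen_removeHalfBalls hU) hY hYne hUc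
    removeHalfBalls_subset hproper (isOpen_biUnion fun _ _ => isOpen_ball) hcover
  obtain ⟨x, hx, hbx⟩ := Set.mem_iUnion₂.mp hbN
  exact ⟨x, hx, b, hbx, hb⟩

/-- Since the half-size ball around `x` has been avoided, one bubble centred at `x` engulfs the
concentric ball of radius `r x / 2 / 16`. -/
lemma Engulfable.exists_union_closedBall {S : Finset E} {r : E → ℝ} [DecidableEq E]
    (h : Engulfable (removeHalfBalls U S r) Y) (hS : S.Nonempty) (hU : IsOpen U)
    (hUc : IsPreconnected U) (hY : IsCompact Y) (hYne : Y.Nonempty) (hSr : IsBallPacking S r U) :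
    ∃ x ∈ S, Engulfable (removeHalfBalls U (S.erase x) r) (Y ∪ closedBall x (r x / 32)) := by
  obtain ⟨x, hx, b, hbx, hb⟩ := h.exists_reach hS hU hUc hY hYne hSr
  have hball : closedBall x ‖b - x‖ ⊆ removeHalfBalls U (S.erase x) r :=
    (closedBall_subset_ball (mem_ball_iff_norm.mp hbx)).trans
      (hSr.ball_subset_removeHalfBalls_erase hx)
  have := hb.union_closedBall (hY.union isCompact_singleton)
    (removeHalfBalls_anti (S.erase_subset x)) (isOpen_removeHalfBalls hU) (Or.inr rfl) hball
    (d := r x / 2) fun v hv => dist_eq_norm v x ▸ (half_lt_dist_of_mem_removeHalfBalls hx hv).le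
  rw [div_div, show (2 * 16 : ℝ) = 32 by norm_num, Set.union_right_comm] at this
  exact ⟨x, hx, this.mono subset_rfl Set.subset_union_left⟩

lemma Engulfable.union_shrunken_packing (hU : IsOpen U) (hUc : IsPreconnected U) {r : E → ℝ}
    (S : Finset E) (hSr : IsBallPacking S r U) {Y : Set E} (hY : IsCompact Y) (hYne : Y.Nonempty)
    (h : Engulfable (removeHalfBalls U S r) Y) :
    Engulfable U (Y ∪ ⋃ x ∈ S, closedBall x (r x / 32)) := by
  classical
  have := FiniteDimensional.proper ℂ E
  induction S using Finset.strongInduction generalizing Y with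
  | H S ih =>
    rcases S.eq_empty_or_nonempty with rfl | hS
    · simpa [removeHalfBalls] using h
    obtain ⟨x, hx, hxY⟩ := h.exists_union_closedBall hS hU hUc hY hYne hSr
    have := ih (S.erase x) (S.erase_ssubset hx) (hSr.subset (S.erase_subset x))
      (hY.union (isCompact_closedBall _ _)) (hYne.mono Set.subset_union_left) hxY
    rwa [Set.union_assoc, ← Finset.set_biUnion_insert _ _ fun x => closedBall x (r x / 32),
      Finset.insert_erase hx] at this

lemma IsBallEmbedding.exists_engulf_packing {F : E → E} {s : ℝ} {S : Finset E} {r : E → ℝ}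
    (hF : IsBallEmbedding 1 U F) (hU : IsOpen U) (hUc : IsPreconnected U) (hs₀ : 0 ≤ s)
    (hs₁ : s < 1) (hSr : IsBallPacking S r (U \ F '' closedBall 0 s)) :
    ∃ G t, IsBallEmbedding 1 U G ∧ 0 < t ∧ t < 1 ∧
      F '' closedBall 0 s ∪ ⋃ x ∈ S, closedBall x (r x / 32) ⊆ G '' ball 0 t := by
  have := FiniteDimensional.proper ℂ E
  have hsub : closedBall (0 : E) s ⊆ ball 0 1 := closedBall_subset_ball hs₁
  have hY : IsCompact (F '' closedBall 0 s) := (isCompact_closedBall 0 s).image_of_continuousOn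
    (hF.contDiffOn.continuousOn.mono hsub)
  have havoid : F '' closedBall 0 s ⊆ removeHalfBalls U S r := fun y hy =>
    ⟨(hF.mapsTo.mono_left hsub).image_subset hy,
      fun hy' => (hSr.iUnion_closedBall_div_subset one_le_two hy').2 hy⟩
  obtain ⟨G, hG, hYG⟩ := (hF.engulfable_image_closedBall hs₀ hs₁ (isOpen_removeHalfBalls hU)
    havoid).union_shrunken_packing hU hUc S (hSr.mono Set.sdiff_subset) hY
      ((nonempty_closedBall.mpr hs₀).image F)
  obtain ⟨t, ht⟩ := hG.exists_subset_image_ball one_pos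
    (hY.union (S.finite_toSet.isCompact_biUnion fun _ _ => isCompact_closedBall _ _)) hYG
  exact ⟨G, t, hG, ht⟩

end Reach

section Volume

open scoped ENNReal
open Module (finrank)

section PackingVolume

variable {E : Type*} [NormedAddCommGroup E] [NormedSpace ℝ E] [FiniteDimensional ℝ E]
  [MeasurableSpace E] [BorelSpace E] (μ : Measure E) [μ.IsAddHaarMeasure] {O : Set E}

lemma exists_isBallPacking (hO : IsOpen O) (hfin : μ O ≠ ∞) {θ : ℝ} (hθ : θ < 1) :
    ∃ S r, IsBallPacking S r O ∧ θ * μ.real O ≤ μ.real (⋃ x ∈ S, closedBall x (r x)) := by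
  obtain ⟨t, r, htc, -, htr, hμ, hdisj⟩ := Besicovitch.exists_disjoint_closedBall_covering_ae μ
    (fun x => {ρ | closedBall x ρ ⊆ O}) O (fun x hx δ hδ => by
      obtain ⟨ε, hε, hεO⟩ := Metric.nhds_basis_closedBall.mem_iff.mp (hO.mem_nhds hx)
      exact ⟨min ε (δ / 2), (closedBall_subset_closedBall (min_le_left _ _)).trans hεO,
        lt_min hε (half_pos hδ), (min_le_right _ _).trans_lt (half_lt_self hδ)⟩)
    (fun _ => 1) (fun _ _ => one_pos)
  rcases eq_or_ne (μ.real O) 0 with hz | hz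
  · exact ⟨∅, r, ⟨by simp, by simp, by simp⟩, by simp [hz]⟩
  have hOpos : 0 < μ.real O := measureReal_nonneg.lt_of_ne' hz
  have hlt : ENNReal.ofReal (θ * μ.real O) < ∑' x : t, μ (closedBall (x : E) (r x)) := by
    rw [← measure_biUnion htc hdisj fun x _ => isClosed_closedBall.measurableSet]
    refine lt_of_lt_of_le ?_ (measure_mono_ae (ae_le_set.mpr hμ))
    rw [← ofReal_measureReal hfin]
    exact (ENNReal.ofReal_lt_ofReal_iff hOpos).mpr (mul_lt_of_lt_one_left hOpos hθ)
  rw [ENNReal.tsum_eq_iSup_sum, lt_iSup_iff] at hlt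
  obtain ⟨T, hT⟩ := hlt
  have hTt : ∀ x ∈ T.map (Function.Embedding.subtype _), x ∈ t := fun x hx => by
    obtain ⟨y, -, rfl⟩ := Finset.mem_map.mp hx
    exact y.2
  have hS : IsBallPacking (T.map (Function.Embedding.subtype _)) r O :=
    ⟨fun x hx => (htr x (hTt x hx)).2.1, fun x hx => (htr x (hTt x hx)).1, hdisj.subset hTt⟩
  refine ⟨_, r, hS, ?_⟩
  rw [measureReal_biUnion_finset hS.pairwiseDisjoint
    (fun x _ => isClosed_closedBall.measurableSet) (fun x _ => measure_closedBall_lt_top.ne),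
    Finset.sum_map]
  refine ((ENNReal.ofReal_le_iff_le_toReal
    (ENNReal.sum_ne_top.mpr fun x _ => measure_closedBall_lt_top.ne)).mp hT.le).trans_eq ?_
  exact ENNReal.toReal_sum fun x _ => measure_closedBall_lt_top.ne

variable {μ}

lemma measureReal_closedBall_div {x : E} {r k : ℝ} (hr : 0 ≤ r) (hk : 0 ≤ k) :
    μ.real (closedBall x (r / k)) = μ.real (closedBall x r) / k ^ finrank ℝ E := by
  rw [measureReal_def, measureReal_def, Measure.addHaar_closedBall μ x (div_nonneg hr hk),
    Measure.addHaar_closedBall μ x hr, ENNReal.toReal_mul, ENNReal.toReal_mul,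
    ENNReal.toReal_ofReal (by positivity), ENNReal.toReal_ofReal (by positivity), div_pow,
    div_mul_eq_mul_div]

lemma IsBallPacking.measureReal_iUnion_div {S : Finset E} {r : E → ℝ} (h : IsBallPacking S r O)
    {k : ℝ} (hk : 1 ≤ k) :
    μ.real (⋃ x ∈ S, closedBall x (r x / k)) =
      μ.real (⋃ x ∈ S, closedBall x (r x)) / k ^ finrank ℝ E := by
  rw [measureReal_biUnion_finset (h.pairwiseDisjoint_div hk)
      (fun _ _ => isClosed_closedBall.measurableSet) (fun _ _ => measure_closedBall_lt_top.ne),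
    measureReal_biUnion_finset h.pairwiseDisjoint
      (fun _ _ => isClosed_closedBall.measurableSet) (fun _ _ => measure_closedBall_lt_top.ne),
    Finset.sum_div]
  exact Finset.sum_congr rfl fun x hx => measureReal_closedBall_div (h.pos x hx).le (by linarith)

end PackingVolume

section Step

variable {E : Type*} [NormedAddCommGroup E] [InnerProductSpace ℂ E]
  [FiniteDimensional ℂ E] [MeasurableSpace E] [BorelSpace E] (μ : Measure E) [μ.IsAddHaarMeasure]
  {U : Set E} {F : E → E} {s : ℝ}

lemma IsBallEmbedding.exists_volume_step {κ : ℝ} (hF : IsBallEmbedding 1 U F) (hU : IsOpen U)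
    (hUc : IsPreconnected U) (hfin : μ U ≠ ∞) (hκ : κ < 1 / 32 ^ (2 * finrank ℂ E))
    (hs₀ : 0 < s) (hs₁ : s < 1) :
    ∃ G t, IsBallEmbedding 1 U G ∧ 0 < t ∧ t < 1 ∧ F '' ball 0 s ⊆ G '' ball 0 t ∧
      μ.real (F '' ball 0 s) + κ * (μ.real U - μ.real (F '' ball 0 s)) ≤
        μ.real (G '' ball 0 t) := by
  have := FiniteDimensional.proper ℂ E
  have hκ₁ : κ ≤ 1 :=
    hκ.le.trans (div_le_one_of_le₀ (one_le_pow₀ (by norm_num)) (by positivity))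
  rw [lt_div_iff₀ (by positivity)] at hκ
  have finite {A : Set E} (hA : A ⊆ U) : μ A ≠ ∞ := measure_ne_top_of_subset hA hfin
  set Y := F '' closedBall 0 s
  have hsub : closedBall (0 : E) s ⊆ ball 0 1 := closedBall_subset_ball hs₁
  have hY : IsCompact Y :=
    (isCompact_closedBall 0 s).image_of_continuousOn (hF.contDiffOn.continuousOn.mono hsub)
  have hYU : Y ⊆ U := (hF.mapsTo.mono_left hsub).image_subset
  have hFY : F '' ball 0 s ⊆ Y := Set.image_mono ball_subset_closedBall
  obtain ⟨S, r, hSr, hvol⟩ := exists_isBallPacking μ (hU.sdiff hY.isClosed)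
    (finite Set.sdiff_subset) hκ
  obtain ⟨G, t, hG, ht₀, ht₁, hGt⟩ := hF.exists_engulf_packing hU hUc hs₀.le hs₁ hSr
  refine ⟨G, t, hG, ht₀, ht₁, hFY.trans (Set.subset_union_left.trans hGt), ?_⟩
  have hB : ⋃ x ∈ S, closedBall x (r x / 32) ⊆ U \ Y :=
    hSr.iUnion_closedBall_div_subset (by norm_num)
  have hκB : κ * (μ.real U - μ.real Y) ≤ μ.real (⋃ x ∈ S, closedBall x (r x / 32)) := by
    rw [hSr.measureReal_iUnion_div (by norm_num), finrank_real_of_complex,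
      le_div_iff₀ (by positivity), mul_right_comm,
      ← measureReal_sdiff hYU hY.isClosed.measurableSet (finite subset_rfl)]
    exact hvol
  have hYB : μ.real Y + μ.real (⋃ x ∈ S, closedBall x (r x / 32)) ≤ μ.real (G '' ball 0 t) := by
    rw [← measureReal_union (Set.disjoint_left.mpr fun x hx hx' => (hB hx').2 hx)
      (S.measurableSet_biUnion fun _ _ => isClosed_closedBall.measurableSet) (finite hYU)
      (finite (hB.trans Set.sdiff_subset))]
    exact measureReal_mono hGt (finite (hG.mapsTo.mono_left (ball_subset_ball ht₁.le)).image_subset)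
  have hFYμ : μ.real (F '' ball 0 s) ≤ μ.real Y := measureReal_mono hFY (finite hYU)
  nlinarith

end Step

end Volume

lemma exists_seq_of_forall_exists {α : Type*} {p : α → Prop} {R : α → α → Prop}
    (h₀ : ∃ a, p a) (h : ∀ a, p a → ∃ b, p b ∧ R a b) :
    ∃ u : ℕ → α, (∀ n, p (u n)) ∧ ∀ n, R (u n) (u (n + 1)) := by
  obtain ⟨a₀, ha₀⟩ := h₀
  choose! next hp hR using h
  let u (n : ℕ) : α := Nat.rec a₀ (fun _ => next) n
  have hu (n : ℕ) : p (u n) := by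
    induction n with
    | zero => exact ha₀
    | succ n ih => exact hp _ ih
  exact ⟨u, hu, fun n => hR _ (hu n)⟩

lemma volume_ball_half_le_one {E : Type*} [NormedAddCommGroup E] [InnerProductSpace ℝ E]
    [FiniteDimensional ℝ E] [MeasurableSpace E] [BorelSpace E] (x : E) :
    volume (ball x (1 / 2)) ≤ 1 := by
  set b := stdOrthonormalBasis ℝ E
  set c : E := ∑ i, (1 / 2 : ℝ) • b i with hc
  have hcube : ball c (1 / 2) ⊆ parallelepiped b := fun y hy => by
    refine (mem_parallelepiped_iff _ _).mpr
      ⟨fun i => inner ℝ (b i) y, ?_, (b.sum_repr' y).symm⟩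
    have hcoord (i) : |inner ℝ (b i) y - 1 / 2| ≤ 1 / 2 :=
      calc |inner ℝ (b i) y - 1 / 2| = |inner ℝ (b i) (y - c)| := by
            rw [inner_sub_right, hc, b.orthonormal.inner_right_fintype]
        _ ≤ ‖b i‖ * ‖y - c‖ := abs_real_inner_le_norm _ _
        _ ≤ 1 / 2 := by rw [b.norm_eq_one, one_mul]; exact (mem_ball_iff_norm.mp hy).le
    exact ⟨fun i => by change 0 ≤ _; linarith [abs_le.mp (hcoord i)],
      fun i => by change _ ≤ 1; linarith [abs_le.mp (hcoord i)]⟩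
  rw [Measure.addHaar_ball_center, ← Measure.addHaar_ball_center volume c]
  exact (measure_mono hcube).trans_eq b.volume_parallelepiped

lemma rhoConst_le_one (m : ℕ) : rhoConst m ≤ 1 :=
  ENNReal.toReal_mono ENNReal.one_ne_top (volume_ball_half_le_one 0)

lemma rhoConst_div_lt (m : ℕ) :
    rhoConst m / (3 * 32 ^ (2 * m)) <
      1 / 32 ^ (2 * Module.finrank ℂ (EuclideanSpace ℂ (Fin m))) := by
  rw [finrank_euclideanSpace_fin, ← div_div]
  gcongr
  linarith [rhoConst_le_one m]

end BallExhaustion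

theorem exists_increasing_ball_images_volume_step_general {E : Type*} [NormedAddCommGroup E]
    [InnerProductSpace ℂ E] [FiniteDimensional ℂ E] [MeasurableSpace E] [BorelSpace E]
    (μ : Measure E) [μ.IsAddHaarMeasure] {U : Set E} (hUopen : IsOpen U) (hUconn : IsConnected U)
    (hUfin : μ U ≠ ⊤) {κ : ℝ} (hκ : κ < 1 / 32 ^ (2 * Module.finrank ℂ E)) :
    ∃ (F : ℕ → E → E) (s : ℕ → ℝ),
      (∀ j, DifferentiableOn ℂ (F j) (ball 0 1)) ∧
      (∀ j, Set.InjOn (F j) (ball 0 1)) ∧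
      (∀ j, F j '' ball 0 1 ⊆ U) ∧
      (∀ j, 0 < s j ∧ s j < 1) ∧
      (∀ j, F j '' ball 0 (s j) ⊆ F (j + 1) '' ball 0 (s (j + 1))) ∧
      (∀ j, (μ (F (j + 1) '' ball 0 (s (j + 1)))).toReal ≥
        (μ (F j '' ball 0 (s j))).toReal +
          κ * ((μ U).toReal - (μ (F j '' ball 0 (s j))).toReal)) := by
  obtain ⟨F₀, hF₀⟩ := BallExhaustion.exists_isBallEmbedding hUopen hUconn.nonempty
  obtain ⟨u, hu, hstep⟩ := BallExhaustion.exists_seq_of_forall_exists (α := (E → E) × ℝ)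
    (p := fun u => BallExhaustion.IsBallEmbedding 1 U u.1 ∧ 0 < u.2 ∧ u.2 < 1)
    (R := fun u v => u.1 '' ball 0 u.2 ⊆ v.1 '' ball 0 v.2 ∧
      μ.real (u.1 '' ball 0 u.2) + κ * (μ.real U - μ.real (u.1 '' ball 0 u.2)) ≤
        μ.real (v.1 '' ball 0 v.2))
    ⟨(F₀, 1 / 2), hF₀, one_half_pos, one_half_lt_one⟩ fun u ⟨hF, hs₀, hs₁⟩ => by
      obtain ⟨G, t, hG, ht₀, ht₁, h⟩ :=
        hF.exists_volume_step μ hUopen hUconn.isPreconnected hUfin hκ hs₀ hs₁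
      exact ⟨(G, t), ⟨hG, ht₀, ht₁⟩, h⟩
  refine ⟨fun j => (u j).1, fun j => (u j).2,
    fun j => (hu j).1.contDiffOn.differentiableOn one_ne_zero, fun j => ?_,
    fun j => (hu j).1.mapsTo.image_subset, fun j => (hu j).2, fun j => (hstep j).1,
    fun j => (hstep j).2⟩
  obtain ⟨c, hc, hexp⟩ := (hu j).1.exists_expandsOn
  exact hexp.injOn hc

/-- **Corollary 2.5.** For a bounded connected open set `U ⊆ ℂ^m` there are injective
holomorphic maps `F_j : B^m(0,1) → U` and numbers `0 < s_j < 1` with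
`F_{j+1}(B^m(0,s_{j+1})) ⊇ F_j(B^m(0,s_j))` and
`vol(F_{j+1}(B^m(0,s_{j+1}))) ≥ vol(F_j(B^m(0,s_j))) +
  ρ_m/(3·32^{2m})·(vol U − vol(F_j(B^m(0,s_j))))` for all `j`. -/
theorem exists_increasing_ball_images_volume_step {m : ℕ}
    (U : Set (EuclideanSpace ℂ (Fin m))) (hUopen : IsOpen U) (hUconn : IsConnected U)
    (hUbdd : Bornology.IsBounded U) :
    ∃ (F : ℕ → EuclideanSpace ℂ (Fin m) → EuclideanSpace ℂ (Fin m)) (s : ℕ → ℝ),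
      (∀ j, DifferentiableOn ℂ (F j) (ball 0 1)) ∧
      (∀ j, Set.InjOn (F j) (ball 0 1)) ∧
      (∀ j, F j '' ball 0 1 ⊆ U) ∧
      (∀ j, 0 < s j ∧ s j < 1) ∧
      (∀ j, F j '' ball 0 (s j) ⊆ F (j + 1) '' ball 0 (s (j + 1))) ∧
      (∀ j, (volume (F (j + 1) '' ball 0 (s (j + 1)))).toReal ≥
        (volume (F j '' ball 0 (s j))).toReal +
          rhoConst m / (3 * 32 ^ (2 * m)) *
            ((volume U).toReal - (volume (F j '' ball 0 (s j))).toReal)) :=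
  exists_increasing_ball_images_volume_step_general volume hUopen hUconn hUbdd.measure_lt_top.ne
    (BallExhaustion.rhoConst_div_lt m)
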